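/- Let n ≥ 1, α > −1, p, q ≥ 1, r ≥ 1 and δ > 0. Let {a_k} be a δ-lattice in 𝔹ₙ, let μ be a positive Borel measure on 𝔹ₙ, and set β_k = (1−|a_k|²)^{−(n+1+α)/p} μ(B(a_k,δ))^{1/q} and κ = 2p/(2p−2q+pq) for 1 ≤ q < 2. Then the embedding J_μ : A^p_α → L^q(dμ) is well defined and r-summing, with the stated bounds (constants depending only on n, p, q, r, α, δ and the lattice), in each of the following cases: (1) if 1 ≤ q < 2 and {β_k} ∈ ℓ^{κq}, then π_r(J_μ) ≤ π_1(J_μ) ≤ C‖{β_k}‖_{ℓ^{κq}}; (2) if q ≥ 2 and {β_k} ∈ ℓ^{p'} (p' = p/(p−1), with ℓ^∞ when p = 1), then π_r(J_μ) ≤ π_1(J_μ) ≤ C‖{β_k}‖_{ℓ^{p'}}; (3) if 1 ≤ r ≤ q and {β_k} ∈ ℓ^r, then π_r(J_μ) ≤ C‖{β_k}‖_{ℓ^r}; (4) if 1 ≤ q ≤ r and {β_k} ∈ ℓ^q, then π_r(J_μ) ≤ π_q(J_μ) ≤ C‖{β_k}‖_{ℓ^q}. -/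

import Mathlib

open MeasureTheory Metric Filter Complex
open scoped ENNReal NNReal BigOperators ComplexConjugate

noncomputable section

/-- `ℂⁿ` with the Euclidean norm. -/
abbrev En (n : ℕ) := EuclideanSpace ℂ (Fin n)

instance (n : ℕ) : InnerProductSpace ℝ (En n) := InnerProductSpace.complexToReal
instance (n : ℕ) : MeasurableSpace (En n) := borel _
instance (n : ℕ) : BorelSpace (En n) := ⟨rfl⟩
instance (n : ℕ) : FiniteDimensional ℝ (En n) := Module.Finite.trans ℂ (En n)

/-- The open unit ball `𝔹ₙ`. -/
def unitBall (n : ℕ) : Set (En n) := Metric.ball 0 1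

/-- The Hermitian pairing `⟨z,w⟩ = ∑ zⱼ conj wⱼ`. -/
def herm {n : ℕ} (z w : En n) : ℂ := ∑ j, z j * conj (w j)

/-- Normalized Lebesgue volume measure on `𝔹ₙ` (total mass 1). -/
def vMeas (n : ℕ) : Measure (En n) :=
  (volume (Metric.ball (0 : En n) 1))⁻¹ • volume.restrict (Metric.ball 0 1)

/-- The normalizing constant `c_α = Γ(n+1+α)/(n!·Γ(α+1))`. -/
def volConst (n : ℕ) (α : ℝ) : ℝ :=
  Real.Gamma (n + 1 + α) / ((n.factorial : ℝ) * Real.Gamma (α + 1))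

/-- The weighted measure `dv_α = c_α (1-|z|²)^α dv`. -/
def wMeas (n : ℕ) (α : ℝ) : Measure (En n) :=
  (vMeas n).withDensity fun z => ENNReal.ofReal (volConst n α * (1 - ‖z‖ ^ 2) ^ α)

-- The Möbius involution `φ_z` of `𝔹ₙ` interchanging `z` and `0`, evaluated at `w`.
open scoped Classical in
def mobius {n : ℕ} (z w : En n) : En n :=
  if z = 0 then -w
  else
    (1 - herm w z)⁻¹ •
      (z - (herm w z / herm z z) • z -
        ((Real.sqrt (1 - ‖z‖ ^ 2) : ℝ) : ℂ) • (w - (herm w z / herm z z) • z))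

/-- The Bergman metric on `𝔹ₙ`. -/
def bergmanDist {n : ℕ} (z w : En n) : ℝ :=
  (1 / 2) * Real.log ((1 + ‖mobius z w‖) / (1 - ‖mobius z w‖))

/-- The Bergman metric ball `B(z,r)`. -/
def bergmanBall {n : ℕ} (z : En n) (r : ℝ) : Set (En n) :=
  {w | w ∈ unitBall n ∧ bergmanDist z w < r}

/-- The Möbius invariant measure `dλ(z) = (1-|z|²)^{-(n+1)} dv(z)`. -/
def invMeas (n : ℕ) : Measure (En n) :=
  (vMeas n).withDensity fun z => ENNReal.ofReal ((1 - ‖z‖ ^ 2) ^ (-(n + 1 : ℝ)))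

/-- A sequence in `𝔹ₙ` which is separated (with separation constant `ε`)
in the Bergman metric. -/
def IsSeparated {n : ℕ} (a : ℕ → En n) (ε : ℝ) : Prop :=
  (∀ k, a k ∈ unitBall n) ∧ ∀ i j, i ≠ j → ε ≤ bergmanDist (a i) (a j)

/-- A `δ`-lattice in the Bergman metric. -/
def IsLattice {n : ℕ} (a : ℕ → En n) (δ : ℝ) : Prop :=
  (∀ k, a k ∈ unitBall n) ∧
    (∀ z ∈ unitBall n, ∃ k, z ∈ bergmanBall (a k) δ) ∧
      ∀ i j, i ≠ j → Disjoint (bergmanBall (a i) (δ / 4)) (bergmanBall (a j) (δ / 4))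

/-- `T` satisfies the `(r,s)`-summing inequality with constant `C`. -/
def SummingBoundWith (r s : ℝ) {X Y : Type*} [NormedAddCommGroup X] [NormedSpace ℂ X]
    [NormedAddCommGroup Y] (T : X → Y) (C : ℝ) : Prop :=
  ∀ (m : ℕ) (x : Fin m → X),
    (∑ k, ‖T (x k)‖ ^ r) ^ (1 / r) ≤
      C * ⨆ φ : {φ : X →L[ℂ] ℂ // ‖φ‖ ≤ 1}, (∑ k, ‖φ.1 (x k)‖ ^ s) ^ (1 / s)

/-- `T` is `(r,s)`-summing. -/
def IsSummingRS (r s : ℝ) {X Y : Type*} [NormedAddCommGroup X] [NormedSpace ℂ X]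
    [NormedAddCommGroup Y] (T : X → Y) : Prop :=
  ∃ C, 0 ≤ C ∧ SummingBoundWith r s T C

/-- The `(r,s)`-summing norm `π_{r,s}(T)`. -/
def summingNorm (r s : ℝ) {X Y : Type*} [NormedAddCommGroup X] [NormedSpace ℂ X]
    [NormedAddCommGroup Y] (T : X → Y) : ℝ :=
  sInf {C | 0 ≤ C ∧ SummingBoundWith r s T C}

/-- The subspace of `Lp` consisting of (a.e. classes of) functions having a representative
holomorphic on `Ω`. -/
def holoSubmodule (n : ℕ) (p : ℝ≥0∞) [Fact (1 ≤ p)] (Ω : Set (En n)) (μ : Measure (En n)) :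
    Submodule ℂ (Lp ℂ p μ) where
  carrier := {f | ∃ g : En n → ℂ, DifferentiableOn ℂ g Ω ∧ (f : En n → ℂ) =ᵐ[μ] g}
  zero_mem' := ⟨fun _ => 0, differentiableOn_const 0, Lp.coeFn_zero ℂ p μ⟩
  add_mem' := by
    rintro f f' ⟨g, hg, hfg⟩ ⟨g', hg', hfg'⟩
    exact ⟨g + g', hg.add hg', (Lp.coeFn_add f f').trans (hfg.add hfg')⟩
  smul_mem' := by
    rintro c f ⟨g, hg, hfg⟩
    exact ⟨c • g, hg.const_smul c, (Lp.coeFn_smul c f).trans (hfg.const_smul c)⟩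

/-- The weighted Bergman space `A^p_α` as a subspace of `L^p(dv_α)`. -/
abbrev BergmanSpace (n : ℕ) (p α : ℝ) [Fact (1 ≤ ENNReal.ofReal p)] :=
  ↥(holoSubmodule n (ENNReal.ofReal p) (unitBall n) (wMeas n α))

/-- The kernel `H_{p,z}(w) = (1-⟨z,w⟩)^{-b}`. -/
def Hker {n : ℕ} (b : ℝ) (z : En n) : En n → ℂ := fun w => (1 - herm z w) ^ (-(b : ℂ))

/-- The `L^p(dv_α)` norm of a function. -/
def lpNormOn (n : ℕ) (p α : ℝ) (g : En n → ℂ) : ℝ :=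
  (∫ w, ‖g w‖ ^ p ∂wMeas n α) ^ (1 / p)

/-- The normalized test function `h_{p,z} = H_{p,z}/‖H_{p,z}‖_{p,α}`
(with kernel exponent `b`). -/
def hTest (n : ℕ) (p α b : ℝ) (z : En n) : En n → ℂ := fun w =>
  Hker b z w / ((lpNormOn n p α (Hker b z) : ℝ) : ℂ)

/-- The `ℓ^s` norm of a sequence of reals, valued in `ℝ≥0∞`. -/
def ellNormE (s : ℝ) (b : ℕ → ℝ) : ℝ≥0∞ := (∑' k, ENNReal.ofReal (b k) ^ s) ^ (1 / s)

/-- The `ℓ^s` norm of a sequence of extended reals. -/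
def ellNormE' (s : ℝ) (b : ℕ → ℝ≥0∞) : ℝ≥0∞ := (∑' k, b k ^ s) ^ (1 / s)

/-- The `L^s(𝔹ₙ,dλ)` norm of a nonnegative function, valued in `ℝ≥0∞`. -/
def lamNormE (n : ℕ) (s : ℝ) (g : En n → ℝ) : ℝ≥0∞ :=
  (∫⁻ z, ENNReal.ofReal (g z) ^ s ∂invMeas n) ^ (1 / s)

/-- The Bergman projection `P_β`. -/
def bergmanProj (n : ℕ) (β : ℝ) (f : En n → ℂ) (z : En n) : ℂ :=
  ∫ w, f w * (1 - herm z w) ^ (-((n : ℂ) + 1 + (β : ℂ))) ∂wMeas n β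

/-- The conjugate Bergman projection. -/
def conjBergmanProj (n : ℕ) (β : ℝ) (f : En n → ℂ) (z : En n) : ℂ :=
  ∫ w, f w * (1 - herm w z) ^ (-((n : ℂ) + 1 + (β : ℂ))) ∂wMeas n β

/-- `g` is bounded and holomorphic on `𝔹ₙ`. -/
def BoundedHolo (n : ℕ) (g : En n → ℂ) : Prop :=
  DifferentiableOn ℂ g (unitBall n) ∧ ∃ M, ∀ z ∈ unitBall n, ‖g z‖ ≤ M

/-- The big Hankel operator `H^β_f(g) = f g - P_β(f g)` at the level of functions. -/
def hankelFun (n : ℕ) (β : ℝ) (f g : En n → ℂ) : En n → ℂ := fun z =>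
  f z * g z - bergmanProj n β (fun w => f w * g w) z

/-- The little Hankel operator `h^β_f(g) = conj-P_β(f g)` at the level of functions. -/
def littleHankelFun (n : ℕ) (β : ℝ) (f g : En n → ℂ) : En n → ℂ :=
  conjBergmanProj n β fun w => f w * g w

/-- `T : A^p_α → L^q(dv_β)` extends the big Hankel operator `H^β_f` from the
bounded holomorphic functions. -/
def ExtendsBigHankel (n : ℕ) (p q α β : ℝ) [Fact (1 ≤ ENNReal.ofReal p)]
    [Fact (1 ≤ ENNReal.ofReal q)] (f : En n → ℂ)
    (T : BergmanSpace n p α → Lp ℂ (ENNReal.ofReal q) (wMeas n β)) : Prop :=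
  ∀ g : En n → ℂ, BoundedHolo n g →
    ∀ G : BergmanSpace n p α,
      ((G : Lp ℂ (ENNReal.ofReal p) (wMeas n α)) : En n → ℂ) =ᵐ[wMeas n α] g →
        (T G : En n → ℂ) =ᵐ[wMeas n β] hankelFun n β f g

/-- `T : A^p_α → L^q(dv_β)` extends the little Hankel operator `h^β_f` from the
bounded holomorphic functions. -/
def ExtendsLittleHankel (n : ℕ) (p q α β : ℝ) [Fact (1 ≤ ENNReal.ofReal p)]
    [Fact (1 ≤ ENNReal.ofReal q)] (f : En n → ℂ)
    (T : BergmanSpace n p α → Lp ℂ (ENNReal.ofReal q) (wMeas n β)) : Prop :=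
  ∀ g : En n → ℂ, BoundedHolo n g →
    ∀ G : BergmanSpace n p α,
      ((G : Lp ℂ (ENNReal.ofReal p) (wMeas n α)) : En n → ℂ) =ᵐ[wMeas n α] g →
        (T G : En n → ℂ) =ᵐ[wMeas n β] littleHankelFun n β f g

/-- `J : A^p_α → L^q(dμ)` represents the Carleson embedding `J_μ f = f`. -/
def RepresentsEmbedding (n : ℕ) (p q α : ℝ) [Fact (1 ≤ ENNReal.ofReal p)]
    [Fact (1 ≤ ENNReal.ofReal q)] (μ : Measure (En n))
    (J : BergmanSpace n p α → Lp ℂ (ENNReal.ofReal q) μ) : Prop :=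
  ∀ (G : BergmanSpace n p α) (g : En n → ℂ), DifferentiableOn ℂ g (unitBall n) →
    ((G : Lp ℂ (ENNReal.ofReal p) (wMeas n α)) : En n → ℂ) =ᵐ[wMeas n α] g →
      (J G : En n → ℂ) =ᵐ[μ] g

/-- The IDA function `G_{q,δ}(f)(z)`. -/
def Gq (n : ℕ) (q δ : ℝ) (f : En n → ℂ) (z : En n) : ℝ :=
  ⨅ h : {h : En n → ℂ // DifferentiableOn ℂ h (bergmanBall z δ)},
    ((vMeas n (bergmanBall z δ)).toReal⁻¹ *
        ∫ w in bergmanBall z δ, ‖f w - h.1 w‖ ^ q ∂vMeas n) ^ (1 / q)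

/-- The average of `f` over the Bergman ball `B(z,δ)`. -/
def ballAvg (n : ℕ) (δ : ℝ) (f : En n → ℂ) (z : En n) : ℂ :=
  ((vMeas n (bergmanBall z δ)).toReal⁻¹ : ℝ) • ∫ w in bergmanBall z δ, f w ∂vMeas n

/-- The local mean oscillation `MO_{q,δ}(f)(z)`. -/
def MOq (n : ℕ) (q δ : ℝ) (f : En n → ℂ) (z : En n) : ℝ :=
  ((vMeas n (bergmanBall z δ)).toReal⁻¹ *
      ∫ w in bergmanBall z δ, ‖f w - ballAvg n δ f z‖ ^ q ∂vMeas n) ^ (1 / q)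

/-- The integral operator `V_{b,β}`. -/
def Vop (n : ℕ) (b β : ℝ) (f : En n → ℂ) (z : En n) : ℂ :=
  ((volConst n (b + β) / volConst n β : ℝ) : ℂ) * (((1 - ‖z‖ ^ 2) ^ b : ℝ) : ℂ) *
    ∫ w, f w * (1 - herm z w) ^ (-((n : ℂ) + 1 + (β : ℂ) + (b : ℂ))) ∂wMeas n β

/-- The norm of the invariant gradient `|∇̃f(z)| = |∇(f ∘ φ_z)(0)|`. -/
def invGradNorm (n : ℕ) (f : En n → ℂ) (z : En n) : ℝ :=
  ‖fderiv ℂ (fun w => f (mobius z w)) 0‖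

/-- The Besov space norm `‖f‖_{B^γ_s}`, valued in `ℝ≥0∞`. -/
def besovNorm (n : ℕ) (s γ : ℝ) (f : En n → ℂ) : ℝ≥0∞ :=
  (∫⁻ z, ENNReal.ofReal ((1 - ‖z‖ ^ 2) ^ γ * invGradNorm n f z) ^ s ∂invMeas n) ^ (1 / s)


/-- The lattice quantity `β_k = (1-|a_k|²)^{-(n+1+α)/p}·μ(B(a_k,δ))^{1/q}`. -/
def carlesonBeta (n : ℕ) (p q α δ : ℝ) (μ : Measure (En n)) (a : ℕ → En n) (k : ℕ) :
    ℝ≥0∞ :=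
  ENNReal.ofReal ((1 - ‖a k‖ ^ 2) ^ (-(((n : ℝ) + 1 + α) / p))) *
    μ (bergmanBall (a k) δ) ^ ((1 : ℝ) / q)

open scoped InnerProductSpace

section Geometry

variable {n : ℕ}

theorem herm_eq_inner (z w : En n) : herm z w = ⟪w, z⟫_ℂ := by
  simp [herm, PiLp.inner_apply]

theorem mem_unitBall {z : En n} : z ∈ unitBall n ↔ ‖z‖ < 1 := by
  simp [unitBall]

theorem isOpen_unitBall : IsOpen (unitBall n) := Metric.isOpen_ball

theorem one_sub_norm_sq_pos {z : En n} (hz : ‖z‖ < 1) : 0 < 1 - ‖z‖ ^ 2 := by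
  nlinarith [norm_nonneg z]

theorem norm_inner_lt_one {z w : En n} (hz : ‖z‖ < 1) (hw : ‖w‖ < 1) : ‖⟪z, w⟫_ℂ‖ < 1 := by
  have := norm_inner_le_norm (𝕜 := ℂ) z w
  nlinarith [norm_nonneg z, norm_nonneg w]

theorem one_sub_norm_le_norm_one_sub_inner {z w : En n} (hw : ‖w‖ ≤ 1) :
    1 - ‖z‖ ≤ ‖1 - ⟪w, z⟫_ℂ‖ := by
  have h := norm_inner_le_norm (𝕜 := ℂ) w z
  have h1 : ‖(1 : ℂ)‖ - ‖⟪w, z⟫_ℂ‖ ≤ ‖1 - ⟪w, z⟫_ℂ‖ := norm_sub_norm_le _ _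
  rw [norm_one] at h1
  nlinarith [norm_nonneg z, norm_nonneg w]

theorem norm_one_sub_inner_le_two {z w : En n} (hz : ‖z‖ < 1) (hw : ‖w‖ < 1) :
    ‖1 - ⟪w, z⟫_ℂ‖ ≤ 2 := by
  have h := norm_inner_lt_one hw hz
  have h1 : ‖1 - ⟪w, z⟫_ℂ‖ ≤ ‖(1 : ℂ)‖ + ‖⟪w, z⟫_ℂ‖ := norm_sub_le _ _
  rw [norm_one] at h1
  linarith

theorem one_sub_inner_ne_zero {z w : En n} (hz : ‖z‖ < 1) (hw : ‖w‖ < 1) :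
    1 - ⟪w, z⟫_ℂ ≠ 0 := by
  have h := one_sub_norm_le_norm_one_sub_inner (z := z) hw.le
  rw [← norm_pos_iff]
  linarith

/-- The defect `√(1 - |a|²)` as a complex number, together with its defining relations. -/
theorem sqrt_defect {a : En n} (ha : ‖a‖ < 1) :
    ((√(1 - ‖a‖ ^ 2) : ℝ) : ℂ) ^ 2 = 1 - ⟪a, a⟫_ℂ ∧ (1 : ℂ) + ((√(1 - ‖a‖ ^ 2) : ℝ) : ℂ) ≠ 0 := by
  constructor
  · rw [← ofReal_pow, Real.sq_sqrt (one_sub_norm_sq_pos ha).le, inner_self_eq_norm_sq_to_K]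
    push_cast
    rfl
  · have : (0 : ℝ) < 1 + √(1 - ‖a‖ ^ 2) := by positivity
    exact_mod_cast this.ne.symm

/-- A formula for the involution `φ_a` without a case distinction at `a = 0`. -/
theorem mobius_eq {a : En n} (ha : ‖a‖ < 1) (z : En n) :
    mobius a z = (1 - ⟪a, z⟫_ℂ)⁻¹ •
      ((1 - ⟪a, z⟫_ℂ / (1 + ((√(1 - ‖a‖ ^ 2) : ℝ) : ℂ))) • a
        - ((√(1 - ‖a‖ ^ 2) : ℝ) : ℂ) • z) := by
  by_cases h : a = 0
  · simp [mobius, h]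
  · obtain ⟨ht, ht'⟩ := sqrt_defect ha
    have haa : ⟪a, a⟫_ℂ ≠ 0 := by simpa using h
    simp only [mobius, h, if_false, herm_eq_inner]
    generalize ((√(1 - ‖a‖ ^ 2) : ℝ) : ℂ) = t at *
    congr 1
    have key : ⟪a, z⟫_ℂ / (1 + t) = (1 - t) * (⟪a, z⟫_ℂ / ⟪a, a⟫_ℂ) := by
      have : ⟪a, a⟫_ℂ = 1 - t ^ 2 := by rw [ht]; ring
      rw [this] at haa ⊢
      field_simp
      ring
    rw [key]
    module

theorem one_sub_inner_mobius {a z w : En n} (ha : ‖a‖ < 1) (hz : ‖z‖ < 1) (hw : ‖w‖ < 1) :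
    1 - ⟪mobius a w, mobius a z⟫_ℂ =
      (1 - ⟪a, a⟫_ℂ) * (1 - ⟪w, z⟫_ℂ) / ((1 - ⟪a, z⟫_ℂ) * (1 - ⟪w, a⟫_ℂ)) := by
  have h1 := one_sub_inner_ne_zero hz ha
  have h2 := one_sub_inner_ne_zero ha hw
  obtain ⟨ht, ht'⟩ := sqrt_defect ha
  have htc : conj ((√(1 - ‖a‖ ^ 2) : ℝ) : ℂ) = ((√(1 - ‖a‖ ^ 2) : ℝ) : ℂ) := conj_ofReal _
  rw [mobius_eq ha, mobius_eq ha]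
  generalize ((√(1 - ‖a‖ ^ 2) : ℝ) : ℂ) = t at *
  have haa : ⟪a, a⟫_ℂ = 1 - t ^ 2 := by rw [ht]; ring
  simp only [inner_smul_left, inner_smul_right, inner_sub_left, inner_sub_right, map_sub, map_one,
    map_div₀, map_add, map_inv₀, htc, inner_conj_symm, haa]
  field_simp
  ring

theorem one_sub_inner_self_mobius {a z : En n} (ha : ‖a‖ < 1) (hz : ‖z‖ < 1) :
    1 - ⟪a, mobius a z⟫_ℂ = (1 - ⟪a, a⟫_ℂ) / (1 - ⟪a, z⟫_ℂ) := by
  have h1 := one_sub_inner_ne_zero hz ha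
  obtain ⟨ht, ht'⟩ := sqrt_defect ha
  rw [mobius_eq ha]
  generalize ((√(1 - ‖a‖ ^ 2) : ℝ) : ℂ) = t at *
  have haa : ⟪a, a⟫_ℂ = 1 - t ^ 2 := by rw [ht]; ring
  simp only [inner_smul_right, inner_sub_right, haa]
  field_simp
  ring

theorem ofReal_one_sub_norm_sq (z : En n) : ((1 - ‖z‖ ^ 2 : ℝ) : ℂ) = 1 - ⟪z, z⟫_ℂ := by
  rw [inner_self_eq_norm_sq_to_K]; push_cast; rfl

theorem norm_one_sub_inner_self {z : En n} (hz : ‖z‖ < 1) :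
    ‖1 - ⟪z, z⟫_ℂ‖ = 1 - ‖z‖ ^ 2 := by
  rw [← ofReal_one_sub_norm_sq, norm_real, Real.norm_of_nonneg (one_sub_norm_sq_pos hz).le]

theorem norm_one_sub_inner_comm (z w : En n) : ‖1 - ⟪z, w⟫_ℂ‖ = ‖1 - ⟪w, z⟫_ℂ‖ := by
  rw [← norm_conj (1 - ⟪w, z⟫_ℂ)]
  simp [inner_conj_symm]

theorem one_sub_norm_mobius_sq {a z : En n} (ha : ‖a‖ < 1) (hz : ‖z‖ < 1) :
    1 - ‖mobius a z‖ ^ 2 = (1 - ‖a‖ ^ 2) * (1 - ‖z‖ ^ 2) / ‖1 - ⟪a, z⟫_ℂ‖ ^ 2 := by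
  have h := one_sub_inner_mobius ha hz hz
  have h2 : (1 - ⟪a, z⟫_ℂ) * (1 - ⟪z, a⟫_ℂ) = ((‖1 - ⟪a, z⟫_ℂ‖ ^ 2 : ℝ) : ℂ) := by
    have := mul_conj' (1 - ⟪a, z⟫_ℂ)
    rw [map_sub, map_one, inner_conj_symm] at this
    rw [this]; push_cast; rfl
  rw [h2, ← ofReal_one_sub_norm_sq, ← ofReal_one_sub_norm_sq, ← ofReal_one_sub_norm_sq] at h
  exact_mod_cast h

theorem norm_mobius_lt_one {a z : En n} (ha : ‖a‖ < 1) (hz : ‖z‖ < 1) : ‖mobius a z‖ < 1 := by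
  have h := one_sub_norm_mobius_sq ha hz
  have h1 := one_sub_norm_sq_pos ha
  have h2 := one_sub_norm_sq_pos hz
  have h3 := norm_pos_iff.2 (one_sub_inner_ne_zero hz ha)
  have : 0 < 1 - ‖mobius a z‖ ^ 2 := by rw [h]; positivity
  nlinarith [norm_nonneg (mobius a z)]

theorem mobius_mobius {a z : En n} (ha : ‖a‖ < 1) (hz : ‖z‖ < 1) :
    mobius a (mobius a z) = z := by
  have h1 := one_sub_inner_ne_zero hz ha
  have h := one_sub_inner_self_mobius ha hz
  have hX : ⟪a, mobius a z⟫_ℂ = 1 - (1 - ⟪a, a⟫_ℂ) / (1 - ⟪a, z⟫_ℂ) := by rw [← h]; ring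
  rw [mobius_eq ha (mobius a z), hX, mobius_eq ha z]
  obtain ⟨ht, ht'⟩ := sqrt_defect ha
  have ht0 : ((√(1 - ‖a‖ ^ 2) : ℝ) : ℂ) ≠ 0 := by
    exact_mod_cast (Real.sqrt_pos.2 (one_sub_norm_sq_pos ha)).ne'
  rw [← ht]
  generalize ((√(1 - ‖a‖ ^ 2) : ℝ) : ℂ) = t at *
  generalize ⟪a, z⟫_ℂ = x at *
  match_scalars
  · field_simp
    ring
  · field_simp
    try ring

theorem differentiableOn_mobius {a : En n} (ha : ‖a‖ < 1) :
    DifferentiableOn ℂ (mobius a) (unitBall n) := by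
  have hin : Differentiable ℂ fun z : En n => ⟪a, z⟫_ℂ := (innerSL ℂ a).differentiable
  refine DifferentiableOn.congr (DifferentiableOn.fun_smul ?_ ?_) fun z _ => mobius_eq ha z
  · refine DifferentiableOn.inv (by fun_prop) fun z hz => ?_
    exact one_sub_inner_ne_zero (mem_unitBall.1 hz) ha
  · fun_prop

theorem mapsTo_mobius {a : En n} (ha : ‖a‖ < 1) :
    Set.MapsTo (mobius a) (unitBall n) (unitBall n) := fun _ hz =>
  mem_unitBall.2 (norm_mobius_lt_one ha (mem_unitBall.1 hz))

/-- A quasi-triangle inequality for the Bergman metric. -/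
theorem norm_one_sub_inner_mul_le {z w ζ : En n} (hz : ‖z‖ < 1) (hw : ‖w‖ < 1) (hζ : ‖ζ‖ < 1) :
    ‖1 - ⟪w, z⟫_ℂ‖ * (1 - ‖ζ‖ ^ 2) ≤ 2 * (‖1 - ⟪ζ, z⟫_ℂ‖ * ‖1 - ⟪w, ζ⟫_ℂ‖) := by
  have h := one_sub_inner_mobius hζ hz hw
  have h2 := norm_one_sub_inner_le_two (norm_mobius_lt_one hζ hz) (norm_mobius_lt_one hζ hw)
  have p1 := norm_pos_iff.2 (one_sub_inner_ne_zero hz hζ)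
  have p2 := norm_pos_iff.2 (one_sub_inner_ne_zero hζ hw)
  rw [h, norm_div, norm_mul, norm_mul, norm_one_sub_inner_self hζ, div_le_iff₀ (by positivity)]
    at h2
  linarith

end Geometry

section Ellipsoid

variable {n : ℕ}

/-- The linear map scaling by `1 - |a|²` along `a` and by `√(1 - |a|²)` orthogonally to `a`;
its translate by `a` maps small balls onto sets comparable with Bergman balls about `a`. -/
def nonisotropicMap (a : En n) : En n →ₗ[ℂ] En n :=
  ((√(1 - ‖a‖ ^ 2) : ℝ) : ℂ) • (LinearMap.id -
    (1 + ((√(1 - ‖a‖ ^ 2) : ℝ) : ℂ))⁻¹ • (innerSL ℂ a).toLinearMap.smulRight a)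

theorem nonisotropicMap_apply (a u : En n) :
    nonisotropicMap a u = ((√(1 - ‖a‖ ^ 2) : ℝ) : ℂ) • (u -
      ((1 + ((√(1 - ‖a‖ ^ 2) : ℝ) : ℂ))⁻¹ * ⟪a, u⟫_ℂ) • a) := by
  simp [nonisotropicMap, smul_smul]

theorem inner_nonisotropicMap {a : En n} (ha : ‖a‖ < 1) (u : En n) :
    ⟪a, nonisotropicMap a u⟫_ℂ = (1 - ⟪a, a⟫_ℂ) * ⟪a, u⟫_ℂ := by
  obtain ⟨ht, ht'⟩ := sqrt_defect ha
  rw [nonisotropicMap_apply]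
  generalize ((√(1 - ‖a‖ ^ 2) : ℝ) : ℂ) = t at *
  have haa : ⟪a, a⟫_ℂ = 1 - t ^ 2 := by rw [ht]; ring
  simp only [inner_smul_right, inner_sub_right, haa]
  field_simp
  ring

theorem inner_nonisotropicMap_self {a : En n} (ha : ‖a‖ < 1) (u : En n) :
    ⟪nonisotropicMap a u, nonisotropicMap a u⟫_ℂ =
      (1 - ⟪a, a⟫_ℂ) * (⟪u, u⟫_ℂ - ⟪u, a⟫_ℂ * ⟪a, u⟫_ℂ) := by
  obtain ⟨ht, ht'⟩ := sqrt_defect ha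
  have htc : conj ((√(1 - ‖a‖ ^ 2) : ℝ) : ℂ) = ((√(1 - ‖a‖ ^ 2) : ℝ) : ℂ) := conj_ofReal _
  rw [nonisotropicMap_apply]
  generalize ((√(1 - ‖a‖ ^ 2) : ℝ) : ℂ) = t at *
  have haa : ⟪a, a⟫_ℂ = 1 - t ^ 2 := by rw [ht]; ring
  simp only [inner_smul_right, inner_smul_left, inner_sub_left, inner_sub_right, map_mul, map_inv₀,
    map_add, map_one, htc, inner_conj_symm, haa]
  field_simp
  ring

theorem one_sub_inner_add_nonisotropicMap {a : En n} (ha : ‖a‖ < 1) (u : En n) :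
    1 - ⟪a, a + nonisotropicMap a u⟫_ℂ = (1 - ⟪a, a⟫_ℂ) * (1 - ⟪a, u⟫_ℂ) := by
  rw [inner_add_right, inner_nonisotropicMap ha]
  ring

theorem one_sub_norm_sq_add_nonisotropicMap {a : En n} (ha : ‖a‖ < 1) (u : En n) :
    1 - ‖a + nonisotropicMap a u‖ ^ 2 =
      (1 - ‖a‖ ^ 2) * (‖1 - ⟪a, u⟫_ℂ‖ ^ 2 - ‖u‖ ^ 2) := by
  have h1 := inner_nonisotropicMap ha u
  have h2 := inner_nonisotropicMap_self ha u
  have h3 : ⟪nonisotropicMap a u, a⟫_ℂ = (1 - ⟪a, a⟫_ℂ) * ⟪u, a⟫_ℂ := by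
    rw [← inner_conj_symm, h1, map_mul, inner_conj_symm, map_sub, map_one, inner_conj_symm]
  have h4 : (1 - ⟪a, u⟫_ℂ) * (1 - ⟪u, a⟫_ℂ) = ((‖1 - ⟪a, u⟫_ℂ‖ ^ 2 : ℝ) : ℂ) := by
    have := mul_conj' (1 - ⟪a, u⟫_ℂ)
    rw [map_sub, map_one, inner_conj_symm] at this
    rw [this]; push_cast; rfl
  have h5 : ((‖u‖ ^ 2 : ℝ) : ℂ) = ⟪u, u⟫_ℂ := by
    rw [inner_self_eq_norm_sq_to_K]; push_cast; rfl
  have : ((1 - ‖a + nonisotropicMap a u‖ ^ 2 : ℝ) : ℂ) =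
      (((1 - ‖a‖ ^ 2) * (‖1 - ⟪a, u⟫_ℂ‖ ^ 2 - ‖u‖ ^ 2) : ℝ) : ℂ) := by
    rw [ofReal_mul, ofReal_sub (‖1 - ⟪a, u⟫_ℂ‖ ^ 2), ← h4, h5, ofReal_one_sub_norm_sq,
      ofReal_one_sub_norm_sq, inner_add_left, inner_add_right, inner_add_right, h1, h2, h3]
    ring
  exact_mod_cast this

theorem norm_one_sub_inner_bounds {a u : En n} (ha : ‖a‖ < 1) :
    1 - ‖u‖ ≤ ‖1 - ⟪a, u⟫_ℂ‖ ∧ ‖1 - ⟪a, u⟫_ℂ‖ ≤ 1 + ‖u‖ := by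
  refine ⟨one_sub_norm_le_norm_one_sub_inner ha.le, ?_⟩
  have h := norm_inner_le_norm (𝕜 := ℂ) a u
  have h1 : ‖1 - ⟪a, u⟫_ℂ‖ ≤ ‖(1 : ℂ)‖ + ‖⟪a, u⟫_ℂ‖ := norm_sub_le _ _
  rw [norm_one] at h1
  nlinarith [norm_nonneg u, norm_nonneg a]

theorem one_sub_norm_sq_add_nonisotropicMap_bounds {a u : En n} (ha : ‖a‖ < 1)
    (hu : ‖u‖ ≤ 1 / 4) :
    (1 - ‖a‖ ^ 2) / 2 ≤ 1 - ‖a + nonisotropicMap a u‖ ^ 2 ∧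
      1 - ‖a + nonisotropicMap a u‖ ^ 2 ≤ 2 * (1 - ‖a‖ ^ 2) := by
  have hs := one_sub_norm_sq_pos ha
  obtain ⟨h1, h2⟩ := norm_one_sub_inner_bounds (u := u) ha
  have hu0 := norm_nonneg u
  rw [one_sub_norm_sq_add_nonisotropicMap ha]
  constructor
  · have : 1 / 2 ≤ ‖1 - ⟪a, u⟫_ℂ‖ ^ 2 - ‖u‖ ^ 2 := by nlinarith
    nlinarith
  · have : ‖1 - ⟪a, u⟫_ℂ‖ ^ 2 - ‖u‖ ^ 2 ≤ 2 := by
      nlinarith [norm_nonneg (1 - ⟪a, u⟫_ℂ)]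
    nlinarith

theorem norm_add_nonisotropicMap_lt_one {a u : En n} (ha : ‖a‖ < 1) (hu : ‖u‖ ≤ 1 / 4) :
    ‖a + nonisotropicMap a u‖ < 1 := by
  have h := (one_sub_norm_sq_add_nonisotropicMap_bounds ha hu).1
  have hs := one_sub_norm_sq_pos ha
  nlinarith [norm_nonneg (a + nonisotropicMap a u)]

theorem norm_mobius_add_nonisotropicMap_le {a u : En n} (ha : ‖a‖ < 1) (hu : ‖u‖ ≤ 1 / 4) :
    ‖mobius a (a + nonisotropicMap a u)‖ ≤ 2 * ‖u‖ := by
  have hz := norm_add_nonisotropicMap_lt_one ha hu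
  have hs := one_sub_norm_sq_pos ha
  obtain ⟨h1, -⟩ := norm_one_sub_inner_bounds (u := u) ha
  have hpos : 0 < ‖1 - ⟪a, u⟫_ℂ‖ := by linarith
  have h := one_sub_norm_mobius_sq ha hz
  rw [one_sub_inner_add_nonisotropicMap ha, norm_mul, norm_one_sub_inner_self ha,
    one_sub_norm_sq_add_nonisotropicMap ha] at h
  have h' : ‖mobius a (a + nonisotropicMap a u)‖ ^ 2 = ‖u‖ ^ 2 / ‖1 - ⟪a, u⟫_ℂ‖ ^ 2 := by
    have : ‖mobius a (a + nonisotropicMap a u)‖ ^ 2 =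
      1 - (1 - ‖mobius a (a + nonisotropicMap a u)‖ ^ 2) := by ring
    rw [this, h]
    field_simp
    ring
  refine abs_le_of_sq_le_sq' ?_ (by positivity) |>.2
  rw [h', div_le_iff₀ (by positivity)]
  have h4 : 1 ≤ 4 * ‖1 - ⟪a, u⟫_ℂ‖ ^ 2 := by nlinarith
  nlinarith [sq_nonneg ‖u‖]

theorem exists_nonisotropicMap_eq {a : En n} (ha : ‖a‖ < 1) (v : En n) :
    ∃ u, nonisotropicMap a u = v ∧
      ‖u‖ ≤ ‖v‖ / √(1 - ‖a‖ ^ 2) + ‖⟪a, v⟫_ℂ‖ / (1 - ‖a‖ ^ 2) := by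
  obtain ⟨ht, ht'⟩ := sqrt_defect ha
  have hs := one_sub_norm_sq_pos ha
  have htpos := Real.sqrt_pos.2 hs
  have ht0 : ((√(1 - ‖a‖ ^ 2) : ℝ) : ℂ) ≠ 0 := by exact_mod_cast htpos.ne'
  refine ⟨(((√(1 - ‖a‖ ^ 2) : ℝ) : ℂ))⁻¹ • v + (⟪a, v⟫_ℂ / ((((1 - ‖a‖ ^ 2) : ℝ) : ℂ) *
    (1 + ((√(1 - ‖a‖ ^ 2) : ℝ) : ℂ)))) • a, ?_, ?_⟩
  · rw [nonisotropicMap_apply, ofReal_one_sub_norm_sq]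
    generalize ((√(1 - ‖a‖ ^ 2) : ℝ) : ℂ) = t at *
    have haa : ⟪a, a⟫_ℂ = 1 - t ^ 2 := by rw [ht]; ring
    simp only [inner_add_right, inner_smul_right, haa]
    generalize ⟪a, v⟫_ℂ = x at *
    match_scalars
    · field_simp
    · field_simp
      ring
  · refine (norm_add_le _ _).trans (add_le_add ?_ ?_)
    · rw [norm_smul, norm_inv, norm_real, Real.norm_of_nonneg htpos.le, div_eq_inv_mul]
    · have e : (1 : ℂ) + ((√(1 - ‖a‖ ^ 2) : ℝ) : ℂ) = ((1 + √(1 - ‖a‖ ^ 2) : ℝ) : ℂ) := by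
        push_cast; rfl
      rw [norm_smul, norm_div, norm_mul, e, norm_real, norm_real, Real.norm_of_nonneg hs.le,
        Real.norm_of_nonneg (by positivity)]
      have : ‖⟪a, v⟫_ℂ‖ / ((1 - ‖a‖ ^ 2) * (1 + √(1 - ‖a‖ ^ 2))) ≤
          ‖⟪a, v⟫_ℂ‖ / (1 - ‖a‖ ^ 2) := by
        gcongr
        nlinarith
      have h0 : 0 ≤ ‖⟪a, v⟫_ℂ‖ / ((1 - ‖a‖ ^ 2) * (1 + √(1 - ‖a‖ ^ 2))) := by positivity
      nlinarith [norm_nonneg a]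

theorem det_nonisotropicMap {a : En n} (ha : ‖a‖ < 1) :
    LinearMap.det (nonisotropicMap a) = ((√(1 - ‖a‖ ^ 2) : ℝ) : ℂ) ^ (n + 1) := by
  obtain ⟨ht, ht'⟩ := sqrt_defect ha
  have hdet : LinearMap.det (LinearMap.id -
      (1 + ((√(1 - ‖a‖ ^ 2) : ℝ) : ℂ))⁻¹ • (innerSL ℂ a).toLinearMap.smulRight a) =
      ((√(1 - ‖a‖ ^ 2) : ℝ) : ℂ) := by
    generalize ((√(1 - ‖a‖ ^ 2) : ℝ) : ℂ) = t at *
    have haa : ⟪a, a⟫_ℂ = 1 - t ^ 2 := by rw [ht]; ring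
    rw [← LinearMap.det_toMatrix (EuclideanSpace.basisFun (Fin n) ℂ).toBasis]
    have hm : LinearMap.toMatrix (EuclideanSpace.basisFun (Fin n) ℂ).toBasis
        (EuclideanSpace.basisFun (Fin n) ℂ).toBasis (LinearMap.id -
          (1 + t)⁻¹ • (innerSL ℂ a).toLinearMap.smulRight a) =
        1 + Matrix.replicateCol Unit (fun i => -(1 + t)⁻¹ * a i) *
          Matrix.replicateRow Unit (fun i => conj (a i)) := by
      ext i j
      simp [LinearMap.toMatrix_apply, Matrix.mul_apply, Matrix.one_apply, PiLp.inner_apply,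
        eq_comm]
      ring
    rw [hm, Matrix.det_one_add_replicateCol_mul_replicateRow]
    have : (fun i => conj (a i)) ⬝ᵥ (fun i => -(1 + t)⁻¹ * a i) = -(1 + t)⁻¹ * ⟪a, a⟫_ℂ := by
      simp only [dotProduct, PiLp.inner_apply, RCLike.inner_apply, Finset.mul_sum]
      exact Finset.sum_congr rfl fun i _ => by ring
    rw [this, haa]
    field_simp
    ring
  rw [nonisotropicMap, LinearMap.det_smul, hdet, finrank_euclideanSpace_fin,
    pow_succ _ n]

theorem volume_image_nonisotropicMap {a : En n} (ha : ‖a‖ < 1) (S : Set (En n)) :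
    volume ((fun u => a + nonisotropicMap a u) '' S) =
      ENNReal.ofReal ((1 - ‖a‖ ^ 2) ^ (n + 1)) * volume S := by
  have h1 : (fun u => a + nonisotropicMap a u) '' S =
      (fun x => a + x) '' (((nonisotropicMap a).restrictScalars ℝ) '' S) := by
    rw [Set.image_image]; rfl
  rw [h1, Set.image_add_left, measure_preimage_add, Measure.addHaar_image_linearMap,
    LinearMap.det_restrictScalars, det_nonisotropicMap ha, Algebra.norm_complex_eq]
  congr 2
  have hs := one_sub_norm_sq_pos ha
  rw [map_pow]
  change |normSq ((√(1 - ‖a‖ ^ 2) : ℝ) : ℂ) ^ (n + 1)| = _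
  rw [normSq_ofReal, Real.mul_self_sqrt hs.le, abs_of_pos (by positivity)]

end Ellipsoid

section Lattice

variable {n : ℕ}

/-- The points `z, w` of the unit ball satisfy `cosh² d(z,w) ≤ M`. -/
def BergmanClose (M : ℝ) (z w : En n) : Prop :=
  ‖1 - ⟪z, w⟫_ℂ‖ ^ 2 ≤ M * ((1 - ‖z‖ ^ 2) * (1 - ‖w‖ ^ 2))

theorem BergmanClose.symm {M : ℝ} {z w : En n} (h : BergmanClose M z w) : BergmanClose M w z := by
  unfold BergmanClose at *
  rw [norm_one_sub_inner_comm, mul_comm (1 - ‖w‖ ^ 2)]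
  exact h

theorem BergmanClose.trans {M M' : ℝ} {z ζ w : En n} (hz : ‖z‖ < 1) (hζ : ‖ζ‖ < 1) (hw : ‖w‖ < 1)
    (h : BergmanClose M z ζ) (h' : BergmanClose M' ζ w) : BergmanClose (4 * M * M') z w := by
  have k := norm_one_sub_inner_mul_le hw hz hζ
  have sζ := one_sub_norm_sq_pos hζ
  unfold BergmanClose at *
  have h1 : (‖1 - ⟪z, w⟫_ℂ‖ * (1 - ‖ζ‖ ^ 2)) ^ 2 ≤
      (2 * (‖1 - ⟪ζ, w⟫_ℂ‖ * ‖1 - ⟪z, ζ⟫_ℂ‖)) ^ 2 := by gcongr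
  have h2 : ‖1 - ⟪z, ζ⟫_ℂ‖ ^ 2 * ‖1 - ⟪ζ, w⟫_ℂ‖ ^ 2 ≤
      (M * ((1 - ‖z‖ ^ 2) * (1 - ‖ζ‖ ^ 2))) * (M' * ((1 - ‖ζ‖ ^ 2) * (1 - ‖w‖ ^ 2))) :=
    mul_le_mul h h' (by positivity) ((by positivity : (0 : ℝ) ≤ _).trans h)
  refine le_of_mul_le_mul_right ?_ (pow_pos sζ 2)
  nlinarith

theorem one_sub_norm_sq_le_two_mul {z w : En n} (hz : ‖z‖ < 1) (hw : ‖w‖ < 1) :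
    1 - ‖w‖ ^ 2 ≤ 2 * ‖1 - ⟪z, w⟫_ℂ‖ := by
  have := one_sub_norm_le_norm_one_sub_inner (z := w) hz.le
  nlinarith [norm_nonneg w]

theorem BergmanClose.norm_one_sub_inner_le {M : ℝ} {z w : En n} (hz : ‖z‖ < 1) (hw : ‖w‖ < 1)
    (hM : 0 ≤ M) (h : BergmanClose M z w) : ‖1 - ⟪z, w⟫_ℂ‖ ≤ 2 * M * (1 - ‖z‖ ^ 2) := by
  have h1 := one_sub_norm_sq_le_two_mul hz hw
  have hpos := norm_pos_iff.2 (one_sub_inner_ne_zero hw hz)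
  have sz := one_sub_norm_sq_pos hz
  unfold BergmanClose at h
  have h2 : M * ((1 - ‖z‖ ^ 2) * (1 - ‖w‖ ^ 2)) ≤
      M * ((1 - ‖z‖ ^ 2) * (2 * ‖1 - ⟪z, w⟫_ℂ‖)) := by gcongr
  refine le_of_mul_le_mul_right ?_ hpos
  nlinarith

theorem BergmanClose.one_sub_norm_sq_le {M : ℝ} {z w : En n} (hz : ‖z‖ < 1) (hw : ‖w‖ < 1)
    (hM : 0 ≤ M) (h : BergmanClose M z w) : 1 - ‖w‖ ^ 2 ≤ 4 * M * (1 - ‖z‖ ^ 2) := by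
  have h1 := one_sub_norm_sq_le_two_mul hz hw
  have h2 := h.norm_one_sub_inner_le hz hw hM
  linarith

theorem bergmanClose_mobius {a u : En n} (ha : ‖a‖ < 1) (hu : ‖u‖ < 1) :
    BergmanClose (1 / (1 - ‖u‖ ^ 2)) a (mobius a u) := by
  have hpos := norm_pos_iff.2 (one_sub_inner_ne_zero hu ha)
  have su := one_sub_norm_sq_pos hu
  unfold BergmanClose
  rw [one_sub_inner_self_mobius ha hu, one_sub_norm_mobius_sq ha hu, norm_div,
    norm_one_sub_inner_self ha]
  apply le_of_eq
  field_simp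

theorem bergmanClose_add_nonisotropicMap {a u : En n} (ha : ‖a‖ < 1) (hu : ‖u‖ ≤ 1 / 4) :
    BergmanClose 4 a (a + nonisotropicMap a u) := by
  have sa := one_sub_norm_sq_pos ha
  obtain ⟨h1, -⟩ := norm_one_sub_inner_bounds (u := u) ha
  unfold BergmanClose
  rw [one_sub_inner_add_nonisotropicMap ha, norm_mul, norm_one_sub_inner_self ha,
    one_sub_norm_sq_add_nonisotropicMap ha]
  have h2 : ‖1 - ⟪a, u⟫_ℂ‖ ^ 2 ≤ 4 * (‖1 - ⟪a, u⟫_ℂ‖ ^ 2 - ‖u‖ ^ 2) := by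
    nlinarith [norm_nonneg u]
  have := mul_le_mul_of_nonneg_left h2 (sq_nonneg (1 - ‖a‖ ^ 2))
  nlinarith

theorem BergmanClose.mem_image {M : ℝ} {z w : En n} (hz : ‖z‖ < 1) (hw : ‖w‖ < 1)
    (hM : 0 ≤ M) (h : BergmanClose M z w) :
    w ∈ (fun u => z + nonisotropicMap z u) '' closedBall 0 (4 * M + 2) := by
  have sz := one_sub_norm_sq_pos hz
  have hD := h.norm_one_sub_inner_le hz hw hM
  obtain ⟨u, hu, hle⟩ := exists_nonisotropicMap_eq hz (w - z)
  refine ⟨u, ?_, by simp [hu]⟩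
  have e1 : ‖⟪z, w - z⟫_ℂ‖ ≤ (2 * M + 1) * (1 - ‖z‖ ^ 2) := by
    have : ⟪z, w - z⟫_ℂ = (1 - ⟪z, z⟫_ℂ) - (1 - ⟪z, w⟫_ℂ) := by rw [inner_sub_right]; ring
    rw [this]
    refine (norm_sub_le _ _).trans ?_
    rw [norm_one_sub_inner_self hz]
    linarith
  have e2 : ‖w - z‖ ≤ (2 * M + 1) * √(1 - ‖z‖ ^ 2) := by
    refine abs_le_of_sq_le_sq' ?_ (by positivity) |>.2
    rw [mul_pow, Real.sq_sqrt sz.le, norm_sub_sq (𝕜 := ℂ)]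
    have hre : RCLike.re ⟪w, z⟫_ℂ = RCLike.re ⟪z, w⟫_ℂ := inner_re_symm _ _
    have hre2 : 1 - RCLike.re ⟪z, w⟫_ℂ ≤ ‖1 - ⟪z, w⟫_ℂ‖ := by
      have := re_le_norm (1 - ⟪z, w⟫_ℂ)
      simpa using this
    rw [hre]
    nlinarith [norm_nonneg w, norm_nonneg z, mul_nonneg hM sz.le,
      mul_nonneg (mul_nonneg hM hM) sz.le]
  rw [mem_closedBall_zero_iff]
  have f1 : ‖w - z‖ / √(1 - ‖z‖ ^ 2) ≤ 2 * M + 1 := by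
    rw [div_le_iff₀ (Real.sqrt_pos.2 sz)]; exact e2
  have f2 : ‖⟪z, w - z⟫_ℂ‖ / (1 - ‖z‖ ^ 2) ≤ 2 * M + 1 := by
    rw [div_le_iff₀ sz]; exact e1
  linarith

theorem bergmanDist_lt_iff {a z : En n} (ha : ‖a‖ < 1) (hz : ‖z‖ < 1) {δ : ℝ} :
    bergmanDist a z < δ ↔
      ‖mobius a z‖ < (Real.exp (2 * δ) - 1) / (Real.exp (2 * δ) + 1) := by
  have h1 := norm_mobius_lt_one ha hz
  have h0 := norm_nonneg (mobius a z)
  have he := Real.exp_pos (2 * δ)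
  unfold bergmanDist
  rw [lt_div_iff₀ (by positivity)]
  have : 1 / 2 * Real.log ((1 + ‖mobius a z‖) / (1 - ‖mobius a z‖)) < δ ↔
      Real.log ((1 + ‖mobius a z‖) / (1 - ‖mobius a z‖)) < 2 * δ := by
    constructor <;> intro h <;> linarith
  rw [this, Real.log_lt_iff_lt_exp (div_pos (by linarith) (by linarith)),
    div_lt_iff₀ (by linarith)]
  constructor <;> intro h <;> nlinarith

theorem exp_quotient_mem {δ : ℝ} (hδ : 0 < δ) :
    0 < (Real.exp (2 * δ) - 1) / (Real.exp (2 * δ) + 1) ∧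
      (Real.exp (2 * δ) - 1) / (Real.exp (2 * δ) + 1) < 1 := by
  have h1 : 1 < Real.exp (2 * δ) := Real.one_lt_exp_iff.2 (by linarith)
  refine ⟨div_pos (by linarith) (by linarith), ?_⟩
  rw [div_lt_one (by linarith)]
  linarith

theorem exists_radius_bergmanBall {δ : ℝ} (hδ : 0 < δ) :
    ∃ R, 0 < R ∧ R < 1 ∧ ∀ a : En n, ‖a‖ < 1 →
      bergmanBall a δ = {z | ‖z‖ < 1 ∧ ‖mobius a z‖ < R} := by
  refine ⟨_, (exp_quotient_mem hδ).1, (exp_quotient_mem hδ).2, fun a ha => ?_⟩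
  ext z
  simp only [bergmanBall, Set.mem_ofPred_eq, mem_unitBall]
  exact and_congr_right fun hz => bergmanDist_lt_iff ha hz

/-- The points of a lattice at bounded Bergman distance from a given point are bounded in
number. -/
theorem IsLattice.exists_card_le {a : ℕ → En n} {δ : ℝ} (hδ : 0 < δ) (ha : IsLattice a δ)
    {M : ℝ} (hM : 0 < M) :
    ∃ N : ℕ, ∀ ζ : En n, ‖ζ‖ < 1 → ∀ T : Finset ℕ, (∀ k ∈ T, BergmanClose M (a k) ζ) →
      T.card ≤ N := by
  obtain ⟨ε, hε, -, hball⟩ := exists_radius_bergmanBall (n := n) (show 0 < δ / 4 by linarith)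
  obtain ⟨hmem, -, hdisj⟩ := ha
  simp only [mem_unitBall] at hmem
  obtain ⟨c, hc0, hc1, hc2⟩ : ∃ c : ℝ, 0 < c ∧ c ≤ 1 / 4 ∧ 2 * c ≤ ε :=
    ⟨min (1 / 4) (ε / 2), by positivity, min_le_left _ _, by
      have := min_le_right (1 / 4) (ε / 2); linarith⟩
  set D : ℕ → Set (En n) := fun k => (fun u => a k + nonisotropicMap (a k) u) '' ball 0 c with hD
  have hDsub : ∀ k, D k ⊆ bergmanBall (a k) (δ / 4) := by
    rintro k _ ⟨u, hu, rfl⟩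
    rw [mem_ball_zero_iff] at hu
    rw [hball _ (hmem k)]
    refine ⟨norm_add_nonisotropicMap_lt_one (hmem k) (by linarith), ?_⟩
    have := norm_mobius_add_nonisotropicMap_le (hmem k) (show ‖u‖ ≤ 1 / 4 by linarith)
    linarith
  set v : ℝ := (volume (ball (0 : En n) c)).toReal with hv
  have hvpos : 0 < v := ENNReal.toReal_pos (measure_ball_pos _ _ hc0).ne' measure_ball_lt_top.ne
  set V : ℝ := (volume (closedBall (0 : En n) (4 * (4 * M * 4) + 2))).toReal with hV
  obtain ⟨N, hN⟩ := exists_nat_ge (V * (4 * M) ^ (n + 1) / v)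
  refine ⟨N, fun ζ hζ T hT => ?_⟩
  have sζ := one_sub_norm_sq_pos hζ
  have hmeasD : ∀ k, MeasurableSet (D k) := by
    intro k
    have hopen : IsOpen (D k) := by
      have hsurj : Function.Surjective (nonisotropicMap (a k)) := fun w =>
        (exists_nonisotropicMap_eq (hmem k) w).imp fun _ h => h.1
      have := (LinearMap.toContinuousLinearMap (nonisotropicMap (a k))).isOpenMap
        (by simpa using hsurj)
      have h2 : IsOpenMap fun u => a k + nonisotropicMap (a k) u :=
        (isOpenMap_add_left (a k)).comp this
      exact h2 _ isOpen_ball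
    exact hopen.measurableSet
  have hsub : (⋃ k ∈ T, D k) ⊆
      (fun u => ζ + nonisotropicMap ζ u) '' closedBall 0 (4 * (4 * M * 4) + 2) := by
    intro η hη
    simp only [Set.mem_iUnion] at hη
    obtain ⟨k, hk, u, hu, rfl⟩ := hη
    rw [mem_ball_zero_iff] at hu
    have hu4 : ‖u‖ ≤ 1 / 4 := by linarith
    exact ((hT k hk).symm.trans hζ (hmem k) (norm_add_nonisotropicMap_lt_one (hmem k) hu4)
      (bergmanClose_add_nonisotropicMap (hmem k) hu4)).mem_image hζ
      (norm_add_nonisotropicMap_lt_one (hmem k) hu4) (by positivity)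
  have hvol := measure_mono (μ := volume) hsub
  rw [measure_biUnion_finset (fun i _ j _ hij =>
    (hdisj i j hij).mono (hDsub i) (hDsub j)) fun k _ => hmeasD k,
    volume_image_nonisotropicMap hζ] at hvol
  simp only [hD] at hvol
  rw [Finset.sum_congr rfl fun k _ => volume_image_nonisotropicMap (hmem k) (ball 0 c)] at hvol
  have hlow : ∀ k ∈ T, ENNReal.ofReal (((1 - ‖ζ‖ ^ 2) / (4 * M)) ^ (n + 1) * v) ≤
      ENNReal.ofReal ((1 - ‖a k‖ ^ 2) ^ (n + 1)) * volume (ball (0 : En n) c) := by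
    intro k hk
    have := (hT k hk).one_sub_norm_sq_le (hmem k) hζ hM.le
    rw [ENNReal.ofReal_mul (by positivity), hv, ENNReal.ofReal_toReal measure_ball_lt_top.ne]
    gcongr
    rw [div_le_iff₀ (by positivity)]
    linarith
  have h3 := (Finset.sum_le_sum hlow).trans hvol
  rw [Finset.sum_const, nsmul_eq_mul,
    ← ENNReal.ofReal_toReal (measure_closedBall_lt_top (x := (0 : En n))
      (r := 4 * (4 * M * 4) + 2) (μ := volume)).ne, ← hV,
    ← ENNReal.ofReal_mul (by positivity), ← ENNReal.ofReal_natCast,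
    ← ENNReal.ofReal_mul (by positivity), ENNReal.ofReal_le_ofReal_iff (by positivity)] at h3
  have h4 : (T.card : ℝ) ≤ V * (4 * M) ^ (n + 1) / v := by
    rw [le_div_iff₀ hvpos]
    rw [div_pow] at h3
    have hp : 0 < (1 - ‖ζ‖ ^ 2) ^ (n + 1) := by positivity
    have hq : 0 < (4 * M) ^ (n + 1) := by positivity
    have h5 : (T.card : ℝ) * v * ((1 - ‖ζ‖ ^ 2) ^ (n + 1) / (4 * M) ^ (n + 1)) ≤
      (1 - ‖ζ‖ ^ 2) ^ (n + 1) * V := by linarith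
    rw [mul_div_assoc', div_le_iff₀ hq] at h5
    refine le_of_mul_le_mul_right ?_ hp
    linarith
  exact_mod_cast h4.trans hN

end Lattice

section SubMeanValue

variable {n : ℕ}

theorem measurable_indicator_of_continuousOn {h : En n → ℂ} {U : Set (En n)} (hU : IsOpen U)
    (hh : ContinuousOn h U) : Measurable (U.indicator h) := by
  classical
  rw [← Set.piecewise_eq_indicator]
  exact hh.measurable_piecewise continuousOn_const hU.measurableSet

/-- Multiplication by a unimodular scalar preserves Lebesgue measure. -/
theorem measurePreserving_smul_of_norm_eq_one {ζ : ℂ} (hζ : ‖ζ‖ = 1) :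
    MeasurePreserving (fun u : En n => ζ • u) volume volume := by
  have hζ0 : ζ ≠ 0 := by rw [← norm_pos_iff, hζ]; exact one_pos
  let e : En n ≃ₗᵢ[ℝ] En n :=
    { (LinearEquiv.smulOfNeZero ℂ (En n) ζ hζ0).restrictScalars ℝ with
      norm_map' := fun u => by
        change ‖ζ • u‖ = ‖u‖
        rw [norm_smul, hζ, one_mul] }
  exact e.measurePreserving

theorem enorm_rpow_mul_le_lintegral_circle {h : En n → ℂ} {U : Set (En n)} (hU : IsOpen U)
    (hh : DifferentiableOn ℂ h U) {v u : En n} (hv : ∀ ζ : ℂ, ‖ζ‖ ≤ 1 → v + ζ • u ∈ U)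
    {r : ℝ} (hr : 1 ≤ r) :
    ‖h v‖ₑ ^ r * ENNReal.ofReal (2 * Real.pi) ≤
      ∫⁻ θ in Set.Ioc 0 (2 * Real.pi), ‖U.indicator h (v + circleMap 0 1 θ • u)‖ₑ ^ r := by
  have hpi := Real.two_pi_pos
  set c : ℝ≥0∞ := ENNReal.ofReal (2 * Real.pi) with hc
  have hc0 : c ≠ 0 := (ENNReal.ofReal_pos.2 hpi).ne'
  have hct : c ≠ ⊤ := ENNReal.ofReal_ne_top
  set ν : Measure ℝ := c⁻¹ • volume.restrict (Set.Ioc 0 (2 * Real.pi)) with hν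
  have : IsProbabilityMeasure ν := ⟨by
    simp only [hν, Measure.smul_apply, Measure.restrict_apply MeasurableSet.univ, Set.univ_inter,
      Real.volume_Ioc, sub_zero, smul_eq_mul]
    exact ENNReal.inv_mul_cancel hc0 hct⟩
  set G : ℝ → ℂ := fun θ => U.indicator h (v + circleMap 0 1 θ • u) with hG
  have hGm : Measurable G := (measurable_indicator_of_continuousOn hU hh.continuousOn).comp
    (by fun_prop)
  have hmean : h v = (2 * Real.pi)⁻¹ • ∫ θ in Set.Ioc 0 (2 * Real.pi), G θ := by
    have hd : DiffContOnCl ℂ (fun ζ : ℂ => h (v + ζ • u)) (ball 0 |1|) := by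
      apply DifferentiableOn.diffContOnCl
      refine hh.comp (f := fun ζ : ℂ => v + ζ • u) (by fun_prop) fun ζ hζ => hv ζ ?_
      rw [abs_one, closure_ball _ one_ne_zero, mem_closedBall_zero_iff] at hζ
      exact hζ
    have := hd.circleAverage
    rw [Real.circleAverage_def, intervalIntegral.integral_of_le hpi.le] at this
    simp only [zero_smul, add_zero] at this
    rw [← this]
    congr 1
    refine setIntegral_congr_fun measurableSet_Ioc fun θ _ => ?_
    simp only [hG]
    rw [Set.indicator_of_mem]
    exact hv _ (by simp)
  have h1 : ‖h v‖ₑ ≤ eLpNorm G 1 ν := by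
    rw [eLpNorm_one_eq_lintegral_enorm, hν, lintegral_smul_measure, hmean, enorm_smul, smul_eq_mul]
    gcongr
    · rw [enorm_inv hpi.ne', Real.enorm_of_nonneg hpi.le]
    · exact enorm_integral_le_lintegral_enorm _
  have h2 : ‖h v‖ₑ ≤ eLpNorm G (ENNReal.ofReal r) ν :=
    h1.trans (eLpNorm_le_eLpNorm_of_exponent_le (by simpa using hr) hGm.aestronglyMeasurable)
  have hr0 : 0 < r := by linarith
  rw [eLpNorm_eq_lintegral_rpow_enorm_toReal (by simpa using hr0) ENNReal.ofReal_ne_top,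
    ENNReal.toReal_ofReal hr0.le, one_div, ENNReal.le_rpow_inv_iff hr0, hν,
    lintegral_smul_measure, smul_eq_mul] at h2
  calc ‖h v‖ₑ ^ r * c ≤ (c⁻¹ * ∫⁻ θ in Set.Ioc 0 (2 * Real.pi), ‖G θ‖ₑ ^ r) * c := by gcongr
    _ = _ := by
      rw [mul_comm, ← mul_assoc, ENNReal.mul_inv_cancel hc0 hct, one_mul]

/-- The sub-mean value property of `|h|^r` over Euclidean balls. -/
theorem enorm_rpow_mul_volume_ball_le {h : En n → ℂ} {U : Set (En n)} (hU : IsOpen U)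
    (hh : DifferentiableOn ℂ h U) {v : En n} {ρ : ℝ} (hv : ball v ρ ⊆ U)
    {r : ℝ} (hr : 1 ≤ r) :
    ‖h v‖ₑ ^ r * volume (ball (0 : En n) ρ) ≤ ∫⁻ u in ball v ρ, ‖h u‖ₑ ^ r := by
  have hpi := Real.two_pi_pos
  have hm := measurable_indicator_of_continuousOn hU hh.continuousOn
  have h1 : ∀ u ∈ ball (0 : En n) ρ, ‖h v‖ₑ ^ r * ENNReal.ofReal (2 * Real.pi) ≤
      ∫⁻ θ in Set.Ioc 0 (2 * Real.pi), ‖U.indicator h (v + circleMap 0 1 θ • u)‖ₑ ^ r := by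
    intro u hu
    refine enorm_rpow_mul_le_lintegral_circle hU hh (fun ζ hζ => hv ?_) hr
    rw [mem_ball_zero_iff] at hu
    rw [mem_ball_iff_norm, add_sub_cancel_left, norm_smul]
    nlinarith [norm_nonneg u]
  have h2 := setLIntegral_mono' (μ := volume) measurableSet_ball h1
  rw [setLIntegral_const, lintegral_lintegral_swap] at h2
  · have h3 : ∀ θ : ℝ, ∫⁻ u in ball (0 : En n) ρ, ‖U.indicator h (v + circleMap 0 1 θ • u)‖ₑ ^ r =
        ∫⁻ u in ball v ρ, ‖h u‖ₑ ^ r := by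
      intro θ
      have hζ : ‖circleMap 0 1 θ‖ = 1 := by simp
      have hp : MeasurePreserving (fun u : En n => v + circleMap 0 1 θ • u) volume volume :=
        (measurePreserving_add_left volume v).comp (measurePreserving_smul_of_norm_eq_one hζ)
      have hpre : (fun u : En n => v + circleMap 0 1 θ • u) ⁻¹' ball v ρ = ball 0 ρ := by
        ext u
        simp [norm_smul]
      rw [← hpre, hp.setLIntegral_comp_preimage (f := fun x => ‖U.indicator h x‖ₑ ^ r)
        measurableSet_ball (hm.enorm.pow_const r)]
      refine setLIntegral_congr_fun measurableSet_ball fun u hu => ?_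
      rw [Set.indicator_of_mem (hv hu)]
    simp only [h3] at h2
    rw [setLIntegral_const, Real.volume_Ioc, sub_zero, mul_right_comm] at h2
    exact (ENNReal.mul_le_mul_iff_left (ENNReal.ofReal_pos.2 hpi).ne' ENNReal.ofReal_ne_top).1 h2
  · have : Measurable (Function.uncurry fun (u : En n) (θ : ℝ) =>
        ‖U.indicator h (v + circleMap 0 1 θ • u)‖ₑ ^ r) := by
      refine Measurable.pow_const (Measurable.enorm (hm.comp ?_)) _
      have : Continuous fun x : En n × ℝ => v + circleMap 0 1 x.2 • x.1 := by fun_prop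
      exact this.measurable
    exact this.aemeasurable

end SubMeanValue

section WeightedMeasure

variable {n : ℕ} {α : ℝ}

theorem volConst_pos (hα : -1 < α) : 0 < volConst n α := by
  unfold volConst
  have h1 : 0 < Real.Gamma (n + 1 + α) :=
    Real.Gamma_pos_of_pos (by have := Nat.cast_nonneg (α := ℝ) n; linarith)
  have h2 : 0 < Real.Gamma (α + 1) := Real.Gamma_pos_of_pos (by linarith)
  positivity

theorem measurable_weight : Measurable fun z : En n =>
    ENNReal.ofReal (volConst n α * (1 - ‖z‖ ^ 2) ^ α) := by
  fun_prop

theorem setLIntegral_wMeas {E : Set (En n)} (hE : MeasurableSet E) (hEb : E ⊆ unitBall n)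
    (f : En n → ℝ≥0∞) :
    ∫⁻ z in E, f z ∂wMeas n α = (volume (ball (0 : En n) 1))⁻¹ *
      ∫⁻ z in E, ENNReal.ofReal (volConst n α * (1 - ‖z‖ ^ 2) ^ α) * f z := by
  have hr : (vMeas n).restrict E = (volume (ball (0 : En n) 1))⁻¹ • volume.restrict E := by
    rw [vMeas, Measure.restrict_smul, Measure.restrict_restrict hE,
      Set.inter_eq_self_of_subset_left (show E ⊆ ball 0 1 from hEb)]
  rw [wMeas, restrict_withDensity hE, lintegral_withDensity_eq_lintegral_mul_non_measurable _
    measurable_weight (Eventually.of_forall fun _ => ENNReal.ofReal_lt_top), hr,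
    lintegral_smul_measure, smul_eq_mul]
  rfl

theorem eqOn_unitBall_of_ae_eq (hα : -1 < α) {f g : En n → ℂ}
    (hf : ContinuousOn f (unitBall n)) (hg : ContinuousOn g (unitBall n))
    (h : f =ᵐ[wMeas n α] g) : Set.EqOn f g (unitBall n) := by
  refine Measure.eqOn_open_of_ae_eq (μ := volume) ?_ isOpen_unitBall hf hg
  have h1 := (ae_withDensity_iff measurable_weight).1 h
  rw [vMeas, Measure.ae_ennreal_smul_measure_iff (ENNReal.inv_ne_zero.2 measure_ball_lt_top.ne)] at h1
  filter_upwards [h1, ae_restrict_mem measurableSet_ball] with z hz hzb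
  have := one_sub_norm_sq_pos (mem_unitBall.1 hzb)
  have hc := volConst_pos (n := n) hα
  exact hz (ENNReal.ofReal_pos.2 (by positivity)).ne'

theorem setLIntegral_image_nonisotropicMap {a : En n} (ha : ‖a‖ < 1) {S : Set (En n)}
    (hS : MeasurableSet S) (f : En n → ℝ≥0∞) :
    ∫⁻ z in (fun u => a + nonisotropicMap a u) '' S, f z =
      ENNReal.ofReal ((1 - ‖a‖ ^ 2) ^ (n + 1)) * ∫⁻ u in S, f (a + nonisotropicMap a u) := by
  have hs := one_sub_norm_sq_pos ha
  have hsurj : Function.Surjective (nonisotropicMap a) := fun w =>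
    (exists_nonisotropicMap_eq ha w).imp fun _ h => h.1
  have hinj := LinearMap.injective_iff_surjective.2 hsurj
  have hd : ∀ x ∈ S, HasFDerivWithinAt (fun u => a + nonisotropicMap a u)
      (LinearMap.toContinuousLinearMap ((nonisotropicMap a).restrictScalars ℝ)) S x := by
    intro x _
    exact ((LinearMap.toContinuousLinearMap
      ((nonisotropicMap a).restrictScalars ℝ)).hasFDerivWithinAt).const_add a
  rw [lintegral_image_eq_lintegral_abs_det_fderiv_mul volume hS hd
    fun x _ y _ hxy => hinj (add_left_cancel hxy), lintegral_const_mul']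
  · congr 2
    rw [LinearMap.det_toContinuousLinearMap, LinearMap.det_restrictScalars,
      det_nonisotropicMap ha, Algebra.norm_complex_eq, map_pow]
    change |normSq ((√(1 - ‖a‖ ^ 2) : ℝ) : ℂ) ^ (n + 1)| = _
    rw [normSq_ofReal, Real.mul_self_sqrt hs.le, abs_of_pos (by positivity)]
  · exact ENNReal.ofReal_ne_top

/-- The image of a Euclidean ball comparable to a Bergman ball around `z`. -/
def bergmanEllipsoid (z : En n) : Set (En n) := (fun u => z + nonisotropicMap z u) '' ball 0 (1 / 8)

theorem measurableSet_bergmanEllipsoid {z : En n} (hz : ‖z‖ < 1) :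
    MeasurableSet (bergmanEllipsoid z) := by
  have hsurj : Function.Surjective (nonisotropicMap z) := fun w =>
    (exists_nonisotropicMap_eq hz w).imp fun _ h => h.1
  have := (LinearMap.toContinuousLinearMap (nonisotropicMap z)).isOpenMap (by simpa using hsurj)
  have h2 : IsOpenMap fun u => z + nonisotropicMap z u := (isOpenMap_add_left z).comp this
  exact (h2 _ isOpen_ball).measurableSet

theorem bergmanClose_of_mem_bergmanEllipsoid {z ζ : En n} (hz : ‖z‖ < 1)
    (hζ : ζ ∈ bergmanEllipsoid z) : ‖ζ‖ < 1 ∧ BergmanClose 4 z ζ := by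
  obtain ⟨u, hu, rfl⟩ := hζ
  rw [mem_ball_zero_iff] at hu
  exact ⟨norm_add_nonisotropicMap_lt_one hz (by linarith),
    bergmanClose_add_nonisotropicMap hz (by linarith)⟩

theorem rpow_ge_of_comparable {s t : ℝ} (hs : 0 < s) (h1 : s / 2 ≤ t) (h2 : t ≤ 2 * s) :
    (2 : ℝ) ^ (-|α|) * s ^ α ≤ t ^ α := by
  rcases le_total 0 α with h | h
  · rw [abs_of_nonneg h, Real.rpow_neg two_pos.le, inv_mul_eq_div, ← Real.div_rpow hs.le two_pos.le]
    exact Real.rpow_le_rpow (by positivity) h1 h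
  · rw [abs_of_nonpos h, neg_neg, ← Real.mul_rpow two_pos.le hs.le]
    exact Real.rpow_le_rpow_of_nonpos (by linarith) h2 h

/-- Weighted pointwise estimate for holomorphic functions on the ball. -/
theorem exists_rpow_mul_enorm_le (n : ℕ) (hα : -1 < α) {p : ℝ} (hp : 1 ≤ p) :
    ∃ C : ℝ, 0 < C ∧ ∀ g : En n → ℂ, DifferentiableOn ℂ g (unitBall n) → ∀ z : En n, ‖z‖ < 1 →
      ENNReal.ofReal ((1 - ‖z‖ ^ 2) ^ ((n : ℝ) + 1 + α)) * ‖g z‖ₑ ^ p ≤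
        ENNReal.ofReal C * ∫⁻ ζ in bergmanEllipsoid z, ‖g ζ‖ₑ ^ p ∂wMeas n α := by
  have hc := volConst_pos (n := n) hα
  set v : ℝ := (volume (ball (0 : En n) (1 / 8))).toReal with hv
  set b : ℝ := (volume (ball (0 : En n) 1)).toReal with hb
  have hv0 : 0 < v := ENNReal.toReal_pos (measure_ball_pos _ _ (by norm_num)).ne'
    measure_ball_lt_top.ne
  have hb0 : 0 < b := ENNReal.toReal_pos (measure_ball_pos _ _ (by norm_num)).ne'
    measure_ball_lt_top.ne
  set c : ℝ := volConst n α * 2 ^ (-|α|) with hcdef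
  have hc0 : 0 < c := by positivity
  refine ⟨b / (c * v), by positivity, fun g hg z hz => ?_⟩
  have hs := one_sub_norm_sq_pos hz
  set s := 1 - ‖z‖ ^ 2 with hsdef
  have hmaps : Set.MapsTo (fun u => z + nonisotropicMap z u) (ball 0 (1 / 4)) (unitBall n) := by
    intro u hu
    rw [mem_ball_zero_iff] at hu
    exact mem_unitBall.2 (norm_add_nonisotropicMap_lt_one hz hu.le)
  have hh : DifferentiableOn ℂ (fun u => g (z + nonisotropicMap z u)) (ball 0 (1 / 4)) := by
    refine hg.comp (f := fun u => z + nonisotropicMap z u) ?_ hmaps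
    exact ((LinearMap.toContinuousLinearMap (nonisotropicMap z)).differentiable.const_add
      z).differentiableOn
  have hmv := enorm_rpow_mul_volume_ball_le isOpen_ball hh (v := 0) (ρ := 1 / 8)
    (ball_subset_ball (by norm_num)) hp
  simp only [map_zero, add_zero] at hmv
  have hsub : bergmanEllipsoid z ⊆ unitBall n := fun ζ hζ =>
    mem_unitBall.2 (bergmanClose_of_mem_bergmanEllipsoid hz hζ).1
  have hlow : ENNReal.ofReal (c * s ^ α) * ∫⁻ ζ in bergmanEllipsoid z, ‖g ζ‖ₑ ^ p ≤
      ENNReal.ofReal b * ∫⁻ ζ in bergmanEllipsoid z, ‖g ζ‖ₑ ^ p ∂wMeas n α := by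
    rw [setLIntegral_wMeas (measurableSet_bergmanEllipsoid hz) hsub, ← mul_assoc, hb,
      ENNReal.ofReal_toReal measure_ball_lt_top.ne, ENNReal.mul_inv_cancel
        (measure_ball_pos _ _ (by norm_num)).ne' measure_ball_lt_top.ne, one_mul,
      ← lintegral_const_mul' _ _ ENNReal.ofReal_ne_top]
    refine setLIntegral_mono' (measurableSet_bergmanEllipsoid hz) fun ζ hζ => ?_
    refine mul_le_mul_left (ENNReal.ofReal_le_ofReal ?_) _
    rw [hcdef, mul_assoc]
    refine mul_le_mul_of_nonneg_left ?_ hc.le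
    obtain ⟨u, hu, rfl⟩ := hζ
    rw [mem_ball_zero_iff] at hu
    obtain ⟨h1, h2⟩ := one_sub_norm_sq_add_nonisotropicMap_bounds hz (show ‖u‖ ≤ 1 / 4 by linarith)
    exact rpow_ge_of_comparable hs h1 h2
  rw [bergmanEllipsoid, setLIntegral_image_nonisotropicMap hz measurableSet_ball] at hlow
  change _ ≤ ENNReal.ofReal b * ∫⁻ ζ in bergmanEllipsoid z, ‖g ζ‖ₑ ^ p ∂wMeas n α at hlow
  have hkey : ENNReal.ofReal (c * s ^ α) * (ENNReal.ofReal (s ^ (n + 1)) *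
      (‖g z‖ₑ ^ p * volume (ball (0 : En n) (1 / 8)))) ≤
      ENNReal.ofReal b * ∫⁻ ζ in bergmanEllipsoid z, ‖g ζ‖ₑ ^ p ∂wMeas n α :=
    le_trans (by gcongr) hlow
  have hpow : s ^ ((n : ℝ) + 1 + α) = s ^ (n + 1) * s ^ α := by
    rw [Real.rpow_add hs]
    norm_cast
  calc ENNReal.ofReal (s ^ ((n : ℝ) + 1 + α)) * ‖g z‖ₑ ^ p
      = ENNReal.ofReal (1 / (c * v)) * (ENNReal.ofReal (c * s ^ α) * (ENNReal.ofReal (s ^ (n + 1)) *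
      (‖g z‖ₑ ^ p * volume (ball (0 : En n) (1 / 8))))) := by
        rw [hpow, ← ENNReal.ofReal_toReal (measure_ball_lt_top (x := (0 : En n))
          (r := 1 / 8) (μ := volume)).ne, ← hv]
        rw [show ∀ A B D X V : ℝ≥0∞, A * (B * (D * (X * V))) = (A * B * D * V) * X by
          intros; ring, ← ENNReal.ofReal_mul (by positivity), ← ENNReal.ofReal_mul (by positivity),
          ← ENNReal.ofReal_mul (by positivity)]
        congr 2
        field_simp
    _ ≤ ENNReal.ofReal (1 / (c * v)) * (ENNReal.ofReal b *
        ∫⁻ ζ in bergmanEllipsoid z, ‖g ζ‖ₑ ^ p ∂wMeas n α) := by gcongr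
    _ = _ := by
      rw [← mul_assoc, ← ENNReal.ofReal_mul (by positivity)]
      congr 2
      field_simp

end WeightedMeasure

section LatticeSum

variable {n : ℕ} {α : ℝ}

theorem one_sub_norm_sq_le_mobius {a u : En n} (ha : ‖a‖ < 1) {R : ℝ} (hR : R < 1)
    (hu : ‖u‖ ≤ R) :
    1 - ‖a‖ ^ 2 ≤ 4 / (1 - R ^ 2) * (1 - ‖mobius a u‖ ^ 2) := by
  have hR0 : 0 ≤ R := (norm_nonneg u).trans hu
  have hu1 : ‖u‖ < 1 := hu.trans_lt hR
  have hs := one_sub_norm_sq_pos ha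
  have hd : 0 < ‖1 - ⟪a, u⟫_ℂ‖ := norm_pos_iff.2 (one_sub_inner_ne_zero hu1 ha)
  have hd2 : ‖1 - ⟪a, u⟫_ℂ‖ ≤ 2 := norm_one_sub_inner_le_two hu1 ha
  have hRR : 0 < 1 - R ^ 2 := by nlinarith
  rw [one_sub_norm_mobius_sq ha hu1, div_mul_div_comm, le_div_iff₀ (by positivity)]
  have h1 : (1 - R ^ 2) * ‖1 - ⟪a, u⟫_ℂ‖ ^ 2 ≤ 4 * (1 - ‖u‖ ^ 2) := by
    have : 1 - R ^ 2 ≤ 1 - ‖u‖ ^ 2 := by nlinarith [norm_nonneg u]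
    have h4 : ‖1 - ⟪a, u⟫_ℂ‖ ^ 2 ≤ 4 := by nlinarith
    nlinarith
  nlinarith

/-- Moebius images of a fixed point under a lattice give bounded overlap, so that weighted values
of a holomorphic function at these points are `p`-summable. -/
theorem IsLattice.exists_sum_rpow_le {a : ℕ → En n} {δ : ℝ} (hδ : 0 < δ) (ha : IsLattice a δ)
    (hα : -1 < α) {p : ℝ} (hp : 1 ≤ p) {R : ℝ} (hR0 : 0 ≤ R) (hR : R < 1) :
    ∃ C : ℝ, 0 < C ∧ ∀ g : En n → ℂ, DifferentiableOn ℂ g (unitBall n) →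
      ∀ u : En n, ‖u‖ ≤ R → ∀ K : Finset ℕ,
        ∑ k ∈ K, ENNReal.ofReal ((1 - ‖a k‖ ^ 2) ^ ((n : ℝ) + 1 + α)) *
          ‖g (mobius (a k) u)‖ₑ ^ p ≤ ENNReal.ofReal C * ∫⁻ z, ‖g z‖ₑ ^ p ∂wMeas n α := by
  have hRR : 0 < 1 - R ^ 2 := by nlinarith
  obtain ⟨C, hC, hpt⟩ := exists_rpow_mul_enorm_le n hα hp
  obtain ⟨N, hN⟩ := ha.exists_card_le hδ (M := 4 * (1 / (1 - R ^ 2)) * 4) (by positivity)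
  have hmem : ∀ k, ‖a k‖ < 1 := fun k => mem_unitBall.1 (ha.1 k)
  have he : 0 < (n : ℝ) + 1 + α := by have := Nat.cast_nonneg (α := ℝ) n; linarith
  set e := (n : ℝ) + 1 + α
  refine ⟨(4 / (1 - R ^ 2)) ^ e * C * (N + 1), by positivity, fun g hg u hu K => ?_⟩
  have hu1 : ‖u‖ < 1 := hu.trans_lt hR
  have hz : ∀ k, ‖mobius (a k) u‖ < 1 := fun k => norm_mobius_lt_one (hmem k) hu1
  set g' := (unitBall n).indicator g with hg'
  have hgg : Set.EqOn g' g (unitBall n) := fun z hz => Set.indicator_of_mem hz g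
  have hgm : Measurable fun z => ‖g' z‖ₑ ^ p :=
    (measurable_indicator_of_continuousOn isOpen_unitBall hg.continuousOn).enorm.pow_const p
  have hterm : ∀ k ∈ K, ENNReal.ofReal ((1 - ‖a k‖ ^ 2) ^ e) * ‖g (mobius (a k) u)‖ₑ ^ p ≤
      ENNReal.ofReal ((4 / (1 - R ^ 2)) ^ e * C) *
        ∫⁻ ζ in bergmanEllipsoid (mobius (a k) u), ‖g' ζ‖ₑ ^ p ∂wMeas n α := by
    intro k _
    have h1 := hpt g' (hg.congr hgg) _ (hz k)
    rw [hgg (mem_unitBall.2 (hz k))] at h1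
    have hsz := one_sub_norm_sq_pos (hz k)
    calc _ ≤ ENNReal.ofReal ((4 / (1 - R ^ 2)) ^ e * (1 - ‖mobius (a k) u‖ ^ 2) ^ e) *
          ‖g (mobius (a k) u)‖ₑ ^ p := by
          refine mul_le_mul_left (ENNReal.ofReal_le_ofReal ?_) _
          rw [← Real.mul_rpow (by positivity) hsz.le]
          exact Real.rpow_le_rpow (one_sub_norm_sq_pos (hmem k)).le
            (one_sub_norm_sq_le_mobius (hmem k) hR hu) he.le
      _ ≤ _ := by
          rw [ENNReal.ofReal_mul (by positivity), ENNReal.ofReal_mul (by positivity), mul_assoc,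
            mul_assoc]
          gcongr
  refine (Finset.sum_le_sum hterm).trans ?_
  rw [← Finset.mul_sum,
    ENNReal.ofReal_mul (p := (4 / (1 - R ^ 2)) ^ e * C) (q := N + 1) (by positivity), mul_assoc]
  gcongr
  rw [Finset.sum_congr rfl fun k _ =>
    (lintegral_indicator (measurableSet_bergmanEllipsoid (hz k)) fun ζ => ‖g' ζ‖ₑ ^ p).symm]
  rw [← lintegral_finsetSum _ fun k _ => hgm.indicator (measurableSet_bergmanEllipsoid (hz k)),
    ← lintegral_const_mul' _ _ ENNReal.ofReal_ne_top]
  refine lintegral_mono fun ζ => ?_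
  classical
  have hle : ‖g' ζ‖ₑ ^ p ≤ ‖g ζ‖ₑ ^ p := by
    gcongr
    simp only [hg', Set.indicator]
    split_ifs <;> simp
  have hsum : ∑ k ∈ K, (bergmanEllipsoid (mobius (a k) u)).indicator (fun ζ => ‖g' ζ‖ₑ ^ p) ζ =
      ((K.filter fun k => ζ ∈ bergmanEllipsoid (mobius (a k) u)).card : ℝ≥0∞) * ‖g' ζ‖ₑ ^ p := by
    simp only [Set.indicator]
    rw [← Finset.sum_filter, Finset.sum_const, nsmul_eq_mul]
  rw [hsum]
  refine mul_le_mul' ?_ hle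
  rw [← ENNReal.ofReal_natCast]
  refine ENNReal.ofReal_le_ofReal ?_
  rcases (K.filter fun k => ζ ∈ bergmanEllipsoid (mobius (a k) u)).eq_empty_or_nonempty with h0 | h0
  · rw [h0]; simp; positivity
  · obtain ⟨k₀, hk₀⟩ := h0
    have hζ : ‖ζ‖ < 1 :=
      (bergmanClose_of_mem_bergmanEllipsoid (hz k₀) (Finset.mem_filter.1 hk₀).2).1
    have := hN ζ hζ (K.filter fun k => ζ ∈ bergmanEllipsoid (mobius (a k) u)) fun k hk => by
      have h1 := (bergmanClose_of_mem_bergmanEllipsoid (hz k) (Finset.mem_filter.1 hk).2).2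
      have h2 : BergmanClose (1 / (1 - R ^ 2)) (a k) (mobius (a k) u) := by
        refine le_trans (bergmanClose_mobius (hmem k) hu1 :) ?_
        have := one_sub_norm_sq_pos (hmem k)
        have := one_sub_norm_sq_pos (hz k)
        have : 1 - R ^ 2 ≤ 1 - ‖u‖ ^ 2 := by nlinarith [norm_nonneg u]
        gcongr
      exact h2.trans (hmem k) (hz k) hζ h1
    have : ((K.filter fun k => ζ ∈ bergmanEllipsoid (mobius (a k) u)).card : ℝ) ≤ N := by
      exact_mod_cast this
    linarith

end LatticeSum

section Representative

variable {n : ℕ} {p α : ℝ} [Fact (1 ≤ ENNReal.ofReal p)]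

/-- The holomorphic representative of an element of the Bergman space. -/
def BergmanSpace.rep (G : BergmanSpace n p α) : En n → ℂ := Classical.choose G.2

theorem BergmanSpace.differentiableOn_rep (G : BergmanSpace n p α) :
    DifferentiableOn ℂ (BergmanSpace.rep G) (unitBall n) :=
  (Classical.choose_spec G.2).1

theorem BergmanSpace.ae_eq_rep (G : BergmanSpace n p α) :
    ((G : Lp ℂ (ENNReal.ofReal p) (wMeas n α)) : En n → ℂ) =ᵐ[wMeas n α] BergmanSpace.rep G :=
  (Classical.choose_spec G.2).2

theorem BergmanSpace.eqOn_rep (hα : -1 < α) (G : BergmanSpace n p α) {g : En n → ℂ}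
    (hg : DifferentiableOn ℂ g (unitBall n))
    (h : ((G : Lp ℂ (ENNReal.ofReal p) (wMeas n α)) : En n → ℂ) =ᵐ[wMeas n α] g) :
    Set.EqOn (BergmanSpace.rep G) g (unitBall n) :=
  eqOn_unitBall_of_ae_eq hα (BergmanSpace.differentiableOn_rep G).continuousOn hg.continuousOn
    ((BergmanSpace.ae_eq_rep G).symm.trans h)

theorem BergmanSpace.rep_add (hα : -1 < α) (G H : BergmanSpace n p α) :
    Set.EqOn (BergmanSpace.rep (G + H)) (BergmanSpace.rep G + BergmanSpace.rep H)
      (unitBall n) :=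
  BergmanSpace.eqOn_rep hα _
    ((BergmanSpace.differentiableOn_rep G).add (BergmanSpace.differentiableOn_rep H))
    ((Lp.coeFn_add _ _).trans ((BergmanSpace.ae_eq_rep G).add (BergmanSpace.ae_eq_rep H)))

theorem BergmanSpace.rep_smul (hα : -1 < α) (c : ℂ) (G : BergmanSpace n p α) :
    Set.EqOn (BergmanSpace.rep (c • G)) (c • BergmanSpace.rep G) (unitBall n) :=
  BergmanSpace.eqOn_rep hα _ ((BergmanSpace.differentiableOn_rep G).const_smul c)
    ((Lp.coeFn_smul _ _).trans ((BergmanSpace.ae_eq_rep G).const_smul c))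

theorem BergmanSpace.lintegral_rep (hp : 1 ≤ p) (G : BergmanSpace n p α) :
    ∫⁻ z, ‖BergmanSpace.rep G z‖ₑ ^ p ∂wMeas n α = ENNReal.ofReal (‖G‖ ^ p) := by
  have hp0 : 0 < p := by linarith
  have h1 : ENNReal.ofReal ‖G‖ = eLpNorm (BergmanSpace.rep G) (ENNReal.ofReal p) (wMeas n α) := by
    rw [← eLpNorm_congr_ae (BergmanSpace.ae_eq_rep G), ofReal_norm, ← Lp.enorm_def]
    rfl
  rw [← ENNReal.ofReal_rpow_of_nonneg (norm_nonneg _) hp0.le, h1,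
    eLpNorm_eq_lintegral_rpow_enorm_toReal (by simpa using hp0) ENNReal.ofReal_ne_top,
    ENNReal.toReal_ofReal hp0.le, one_div, ENNReal.rpow_inv_rpow hp0.ne.symm]

/-- Evaluation at a point of the ball as a linear functional. -/
def BergmanSpace.evalAt (hα : -1 < α) (z : En n) (hz : ‖z‖ < 1) : BergmanSpace n p α →ₗ[ℂ] ℂ where
  toFun G := BergmanSpace.rep G z
  map_add' G H := BergmanSpace.rep_add hα G H (mem_unitBall.2 hz)
  map_smul' c G := BergmanSpace.rep_smul hα c G (mem_unitBall.2 hz)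

end Representative

section Khinchine

/-- The signed sum `∑ ±x k` with sign `+` exactly on `t`. -/
def signedSum {E : Type*} [AddCommGroup E] (s : Finset ℕ) (x : ℕ → E) (t : Finset ℕ) : E :=
  ∑ k ∈ s, if k ∈ t then x k else -x k

theorem sum_powerset_insert_signedSum {E M : Type*} [AddCommGroup E] [AddCommMonoid M]
    {s : Finset ℕ} {i : ℕ} (hi : i ∉ s) (x : ℕ → E) (F : E → M) :
    ∑ t ∈ (insert i s).powerset, F (signedSum (insert i s) x t) =
      ∑ t ∈ s.powerset, (F (signedSum s x t - x i) + F (signedSum s x t + x i)) := by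
  rw [Finset.sum_powerset_insert hi, Finset.sum_add_distrib]
  congr 1 <;> refine Finset.sum_congr rfl fun t ht => ?_
  · have : i ∉ t := fun h => hi (Finset.mem_powerset.1 ht h)
    simp only [signedSum, Finset.sum_insert hi, this, if_false]
    rw [neg_add_eq_sub]
  · simp only [signedSum, Finset.sum_insert hi, Finset.mem_insert_self, if_true]
    rw [add_comm]
    congr 2
    refine Finset.sum_congr rfl fun k hk => ?_
    have : k ≠ i := fun h => hi (h ▸ hk)
    simp [this]

theorem sum_signedSum_sq (s : Finset ℕ) (x : ℕ → ℝ) :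
    ∑ t ∈ s.powerset, signedSum s x t ^ 2 = 2 ^ s.card * ∑ k ∈ s, x k ^ 2 := by
  induction s using Finset.induction_on with
  | empty => simp [signedSum]
  | insert i s hi ih =>
    rw [sum_powerset_insert_signedSum hi x fun y => y ^ 2, Finset.sum_insert hi,
      Finset.card_insert_of_notMem hi]
    calc _ = ∑ t ∈ s.powerset, (2 * signedSum s x t ^ 2 + 2 * x i ^ 2) :=
          Finset.sum_congr rfl fun t _ => by ring
      _ = _ := by
        rw [Finset.sum_add_distrib, ← Finset.mul_sum, ih, Finset.sum_const, Finset.card_powerset,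
          nsmul_eq_mul]
        push_cast
        ring

theorem sum_signedSum_pow_four_le (s : Finset ℕ) (x : ℕ → ℝ) :
    ∑ t ∈ s.powerset, signedSum s x t ^ 4 ≤ 2 ^ s.card * (3 * (∑ k ∈ s, x k ^ 2) ^ 2) := by
  induction s using Finset.induction_on with
  | empty => simp [signedSum]
  | insert i s hi ih =>
    rw [sum_powerset_insert_signedSum hi x fun y => y ^ 4, Finset.sum_insert hi,
      Finset.card_insert_of_notMem hi]
    calc _ = ∑ t ∈ s.powerset,
          (2 * signedSum s x t ^ 4 + 12 * x i ^ 2 * signedSum s x t ^ 2 + 2 * x i ^ 4) :=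
          Finset.sum_congr rfl fun t _ => by ring
      _ ≤ _ := by
        rw [Finset.sum_add_distrib, Finset.sum_add_distrib, ← Finset.mul_sum, ← Finset.mul_sum,
          sum_signedSum_sq, Finset.sum_const, Finset.card_powerset, nsmul_eq_mul]
        push_cast
        have : (0 : ℝ) ≤ 2 ^ s.card * x i ^ 4 := by positivity
        rw [pow_succ (2 : ℝ)]
        nlinarith

theorem sqrt_sum_sq_le_signedSum (s : Finset ℕ) (x : ℕ → ℝ) :
    √(∑ k ∈ s, x k ^ 2) ≤ 2 / 2 ^ s.card * ∑ t ∈ s.powerset, |signedSum s x t| := by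
  set σ := √(∑ k ∈ s, x k ^ 2) with hσ
  have hσ2 : σ ^ 2 = ∑ k ∈ s, x k ^ 2 := Real.sq_sqrt (Finset.sum_nonneg fun _ _ => sq_nonneg _)
  have hσ0 : 0 ≤ σ := Real.sqrt_nonneg _
  have hA : 0 ≤ ∑ t ∈ s.powerset, |signedSum s x t| := Finset.sum_nonneg fun _ _ => abs_nonneg _
  rcases hσ0.eq_or_lt with h | hpos
  · rw [← h]; positivity
  have hpt : ∀ y : ℝ, 12 * σ ^ 2 * y ^ 2 - y ^ 4 ≤ 16 * σ ^ 3 * |y| := by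
    intro y
    have h2 : y ^ 2 = |y| ^ 2 := (sq_abs y).symm
    have h4 : y ^ 4 = |y| ^ 4 := by rw [show y ^ 4 = (y ^ 2) ^ 2 by ring, h2]; ring
    rw [h2, h4]
    have := abs_nonneg y
    have hh : 0 ≤ |y| * (|y| - 2 * σ) ^ 2 * (|y| + 4 * σ) := by positivity
    nlinarith
  have h1 := Finset.sum_le_sum fun t (_ : t ∈ s.powerset) => hpt (signedSum s x t)
  rw [Finset.sum_sub_distrib, ← Finset.mul_sum, ← Finset.mul_sum, sum_signedSum_sq, ← hσ2] at h1
  have h2 := sum_signedSum_pow_four_le s x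
  rw [← hσ2] at h2
  have hN : (0 : ℝ) < 2 ^ s.card := by positivity
  rw [div_mul_eq_mul_div, le_div_iff₀ hN]
  have h3 : 0 < σ ^ 3 := by positivity
  refine le_of_mul_le_mul_left ?_ h3
  have h4 : 0 ≤ σ ^ 3 * ∑ t ∈ s.powerset, |signedSum s x t| := by positivity
  nlinarith

theorem re_signedSum (s t : Finset ℕ) (c : ℕ → ℂ) :
    (signedSum s c t).re = signedSum s (fun k => (c k).re) t := by
  simp only [signedSum, re_sum]
  exact Finset.sum_congr rfl fun k _ => by split_ifs <;> simp

theorem im_signedSum (s t : Finset ℕ) (c : ℕ → ℂ) :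
    (signedSum s c t).im = signedSum s (fun k => (c k).im) t := by
  simp only [signedSum, im_sum]
  exact Finset.sum_congr rfl fun k _ => by split_ifs <;> simp

/-- Khinchine's inequality (`ℓ²` against the `L¹` norm of Rademacher sums). -/
theorem sqrt_sum_norm_sq_le_signedSum (s : Finset ℕ) (c : ℕ → ℂ) :
    √(∑ k ∈ s, ‖c k‖ ^ 2) ≤ 4 / 2 ^ s.card * ∑ t ∈ s.powerset, ‖signedSum s c t‖ := by
  have h0 : √(∑ k ∈ s, ‖c k‖ ^ 2) ≤ √(∑ k ∈ s, (c k).re ^ 2) + √(∑ k ∈ s, (c k).im ^ 2) := by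
    have : ∑ k ∈ s, ‖c k‖ ^ 2 = ∑ k ∈ s, (c k).re ^ 2 + ∑ k ∈ s, (c k).im ^ 2 := by
      rw [← Finset.sum_add_distrib]
      exact Finset.sum_congr rfl fun k _ => by rw [Complex.sq_norm, normSq_apply]; ring
    rw [this]
    have hre : 0 ≤ ∑ k ∈ s, (c k).re ^ 2 := Finset.sum_nonneg fun _ _ => sq_nonneg _
    have him : 0 ≤ ∑ k ∈ s, (c k).im ^ 2 := Finset.sum_nonneg fun _ _ => sq_nonneg _
    rw [Real.sqrt_le_left (by positivity), add_sq, Real.sq_sqrt hre, Real.sq_sqrt him]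
    have := mul_nonneg (Real.sqrt_nonneg (∑ k ∈ s, (c k).re ^ 2))
      (Real.sqrt_nonneg (∑ k ∈ s, (c k).im ^ 2))
    linarith
  have h1 := sqrt_sum_sq_le_signedSum s fun k => (c k).re
  have h2 := sqrt_sum_sq_le_signedSum s fun k => (c k).im
  have h3 : ∑ t ∈ s.powerset, |signedSum s (fun k => (c k).re) t| ≤
      ∑ t ∈ s.powerset, ‖signedSum s c t‖ := Finset.sum_le_sum fun t _ => by
    rw [← re_signedSum]; exact abs_re_le_norm _
  have h4 : ∑ t ∈ s.powerset, |signedSum s (fun k => (c k).im) t| ≤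
      ∑ t ∈ s.powerset, ‖signedSum s c t‖ := Finset.sum_le_sum fun t _ => by
    rw [← im_signedSum]; exact abs_im_le_norm _
  calc _ ≤ 2 / 2 ^ s.card * ∑ t ∈ s.powerset, ‖signedSum s c t‖ +
        2 / 2 ^ s.card * ∑ t ∈ s.powerset, ‖signedSum s c t‖ := by
        refine h0.trans (add_le_add (h1.trans ?_) (h2.trans ?_)) <;> gcongr
    _ = _ := by ring

end Khinchine

section Minkowski

/-- Minkowski's integral inequality for finitely many functions and exponent `2`. -/
theorem rpow_sum_lintegral_sq_le {Ω : Type*} [MeasurableSpace Ω] {ν : Measure Ω} (K : Finset ℕ)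
    {f : ℕ → Ω → ℝ≥0∞} (hf : ∀ k ∈ K, AEMeasurable (f k) ν)
    (hfin : ∀ k ∈ K, ∫⁻ u, f k u ∂ν ≠ ⊤) :
    (∑ k ∈ K, (∫⁻ u, f k u ∂ν) ^ (2 : ℝ)) ^ (1 / (2 : ℝ)) ≤
      ∫⁻ u, (∑ k ∈ K, f k u ^ (2 : ℝ)) ^ (1 / (2 : ℝ)) ∂ν := by
  set a : ℕ → ℝ≥0∞ := fun k => ∫⁻ u, f k u ∂ν with ha
  set S := (∑ k ∈ K, a k ^ (2 : ℝ)) ^ (1 / (2 : ℝ)) with hS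
  have hStop : S ≠ ⊤ := ENNReal.rpow_ne_top_of_nonneg (by norm_num)
    (ENNReal.sum_ne_top.2 fun k hk => ENNReal.rpow_ne_top_of_nonneg (by norm_num) (hfin k hk))
  by_cases hS0 : S = 0
  · rw [hS0]; exact zero_le
  have hSS : S * S = ∑ k ∈ K, a k ^ (2 : ℝ) := by
    rw [hS, ← ENNReal.rpow_add_of_nonneg _ _ (by norm_num) (by norm_num)]
    norm_num
  have key : S * S ≤ S * ∫⁻ u, (∑ k ∈ K, f k u ^ (2 : ℝ)) ^ (1 / (2 : ℝ)) ∂ν := by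
    calc S * S = ∑ k ∈ K, ∫⁻ u, a k * f k u ∂ν := by
          rw [hSS]
          refine Finset.sum_congr rfl fun k hk => ?_
          rw [lintegral_const_mul'' _ (hf k hk), ENNReal.rpow_two, sq]
      _ = ∫⁻ u, ∑ k ∈ K, a k * f k u ∂ν :=
          (lintegral_finsetSum' _ fun k hk => (hf k hk).const_mul _).symm
      _ ≤ ∫⁻ u, S * (∑ k ∈ K, f k u ^ (2 : ℝ)) ^ (1 / (2 : ℝ)) ∂ν :=
          lintegral_mono fun u => ENNReal.inner_le_Lp_mul_Lq K a (fun k => f k u)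
            Real.HolderConjugate.two_two
      _ = _ := lintegral_const_mul' _ _ hStop
  exact (ENNReal.mul_le_mul_iff_right hS0 hStop).1 key

end Minkowski

section WeakNorm

variable {X Y : Type*} [NormedAddCommGroup X] [NormedSpace ℂ X]

/-- The weak `ℓ^r` norm of a finite family. -/
def weakNorm (r : ℝ) {m : ℕ} (x : Fin m → X) : ℝ :=
  ⨆ φ : {φ : X →L[ℂ] ℂ // ‖φ‖ ≤ 1}, (∑ k, ‖φ.1 (x k)‖ ^ r) ^ (1 / r)

theorem bddAbove_weakNorm {r : ℝ} (hr : 1 ≤ r) {m : ℕ} (x : Fin m → X) :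
    BddAbove (Set.range fun φ : {φ : X →L[ℂ] ℂ // ‖φ‖ ≤ 1} =>
      (∑ k, ‖φ.1 (x k)‖ ^ r) ^ (1 / r)) := by
  refine ⟨(∑ k, ‖x k‖ ^ r) ^ (1 / r), ?_⟩
  rintro _ ⟨φ, rfl⟩
  dsimp only
  gcongr with k
  exact (φ.1.le_opNorm (x k)).trans (mul_le_of_le_one_left (norm_nonneg _) φ.2)

theorem weakNorm_nonneg (r : ℝ) {m : ℕ} (x : Fin m → X) : 0 ≤ weakNorm r x :=
  Real.iSup_nonneg fun _ => by positivity

theorem sum_norm_rpow_le_weakNorm {r : ℝ} (hr : 1 ≤ r) {M : ℝ} (hM : 0 ≤ M) (f : X →ₗ[ℂ] ℂ)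
    (hf : ∀ x, ‖f x‖ ≤ M * ‖x‖) {m : ℕ} (x : Fin m → X) :
    ∑ k, ‖f (x k)‖ ^ r ≤ (M * weakNorm r x) ^ r := by
  have hr0 : 0 < r := by linarith
  rcases hM.eq_or_lt with rfl | hM
  · have : ∀ x, f x = 0 := fun x => by simpa using hf x
    simp [this, Real.zero_rpow hr0.ne']
  let φ : X →L[ℂ] ℂ := f.mkContinuous M hf
  let ψ : X →L[ℂ] ℂ := ((M : ℂ)⁻¹) • φ
  have hψ : ‖ψ‖ ≤ 1 := by
    refine ContinuousLinearMap.opNorm_le_bound _ zero_le_one fun y => ?_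
    change ‖(M : ℂ)⁻¹ • f y‖ ≤ 1 * ‖y‖
    rw [norm_smul, norm_inv, norm_real, Real.norm_of_nonneg hM.le, one_mul, inv_mul_le_iff₀ hM]
    exact hf y
  have h1 : (∑ k, ‖ψ (x k)‖ ^ r) ^ (1 / r) ≤ weakNorm r x :=
    le_ciSup (bddAbove_weakNorm hr x) ⟨ψ, hψ⟩
  rw [one_div, Real.rpow_inv_le_iff_of_pos (by positivity) (weakNorm_nonneg r x) hr0] at h1
  have h2 : ∀ k, ‖f (x k)‖ ^ r = M ^ r * ‖ψ (x k)‖ ^ r := by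
    intro k
    rw [← Real.mul_rpow hM.le (norm_nonneg _)]
    congr 1
    change _ = M * ‖(M : ℂ)⁻¹ • f (x k)‖
    rw [norm_smul, norm_inv, norm_real, Real.norm_of_nonneg hM.le, mul_inv_cancel_left₀ hM.ne']
  rw [Finset.sum_congr rfl fun k _ => h2 k, ← Finset.mul_sum,
    Real.mul_rpow hM.le (weakNorm_nonneg r x)]
  gcongr

variable [NormedAddCommGroup Y] [NormedSpace ℂ Y]

/-- The inclusion theorem: `s`-summing operators are `r`-summing for `s ≤ r`. -/
theorem SummingBoundWith.mono_exponent {s r C : ℝ} (hs : 1 ≤ s) (hsr : s ≤ r) {T : X →ₗ[ℂ] Y}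
    (hC : 0 ≤ C) (h : SummingBoundWith s s T C) : SummingBoundWith r r T C := by
  rcases hsr.eq_or_lt with rfl | hlt
  · exact h
  intro m x
  have hs0 : 0 < s := by linarith
  have hr0 : 0 < r := by linarith
  change _ ≤ C * weakNorm r x
  set A := ∑ k, ‖T (x k)‖ ^ r with hA
  have hA0 : 0 ≤ A := by positivity
  rcases hA0.eq_or_lt with h0 | hApos
  · rw [← h0, Real.zero_rpow (by positivity)]
    exact mul_nonneg hC (weakNorm_nonneg r x)
  set l : Fin m → ℝ := fun k => ‖T (x k)‖ ^ (r / s - 1) with hl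
  have hl0 : ∀ k, 0 ≤ l k := fun k => by positivity
  have hrs : 0 < r / s - 1 := by rw [sub_pos, lt_div_iff₀ hs0]; linarith
  have h1 := h m fun k => (l k : ℂ) • x k
  have hlT : ∀ k, ‖T ((l k : ℂ) • x k)‖ ^ s = ‖T (x k)‖ ^ r := by
    intro k
    rw [map_smul, norm_smul, norm_real, Real.norm_of_nonneg (hl0 k)]
    rcases (norm_nonneg (T (x k))).eq_or_lt with hz | hz
    · rw [← hz, mul_zero, Real.zero_rpow hs0.ne', Real.zero_rpow hr0.ne']
    · simp only [hl]
      rw [← Real.rpow_add_one hz.ne', ← Real.rpow_mul hz.le]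
      congr 1
      field_simp
      ring
  simp only [hlT] at h1
  rw [← hA] at h1
  have hconj : (r / (r - s)).HolderConjugate (r / s) := by
    rw [Real.holderConjugate_iff]
    have : 0 < r - s := by linarith
    refine ⟨by rw [lt_div_iff₀ this]; linarith, by field_simp; ring⟩
  have h2 : (⨆ φ : {φ : X →L[ℂ] ℂ // ‖φ‖ ≤ 1}, (∑ k, ‖φ.1 ((l k : ℂ) • x k)‖ ^ s) ^ (1 / s)) ≤
      A ^ (1 / s - 1 / r) * weakNorm r x := by
    have : Nonempty {φ : X →L[ℂ] ℂ // ‖φ‖ ≤ 1} := ⟨0, by simp⟩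
    refine ciSup_le fun φ => ?_
    have hφ : (∑ k, ‖φ.1 (x k)‖ ^ r) ^ (1 / r) ≤ weakNorm r x :=
      le_ciSup (bddAbove_weakNorm (by linarith) x) φ
    have hH := Real.inner_le_Lp_mul_Lq_of_nonneg Finset.univ hconj
      (f := fun k => l k ^ s) (g := fun k => ‖φ.1 (x k)‖ ^ s)
      (fun k _ => by positivity) (fun k _ => by positivity)
    have e1 : ∀ k, (l k ^ s) ^ (r / (r - s)) = ‖T (x k)‖ ^ r := by
      intro k
      simp only [hl]
      rw [← Real.rpow_mul (norm_nonneg _), ← Real.rpow_mul (norm_nonneg _)]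
      congr 1
      have : r - s ≠ 0 := by linarith
      field_simp
    have e2 : ∀ k, (‖φ.1 (x k)‖ ^ s) ^ (r / s) = ‖φ.1 (x k)‖ ^ r := by
      intro k
      rw [← Real.rpow_mul (norm_nonneg _)]
      congr 1
      field_simp
    simp only [e1, e2] at hH
    rw [← hA] at hH
    calc (∑ k, ‖φ.1 ((l k : ℂ) • x k)‖ ^ s) ^ (1 / s)
        = (∑ k, l k ^ s * ‖φ.1 (x k)‖ ^ s) ^ (1 / s) := by
          congr 1
          refine Finset.sum_congr rfl fun k _ => ?_
          rw [map_smul, norm_smul, norm_real, Real.norm_of_nonneg (hl0 k),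
            Real.mul_rpow (hl0 k) (norm_nonneg _)]
      _ ≤ (A ^ (1 / (r / (r - s))) * (∑ k, ‖φ.1 (x k)‖ ^ r) ^ (1 / (r / s))) ^ (1 / s) := by
          gcongr
      _ = A ^ (1 / s - 1 / r) * (∑ k, ‖φ.1 (x k)‖ ^ r) ^ (1 / r) := by
          rw [Real.mul_rpow (by positivity) (by positivity), ← Real.rpow_mul hA0,
            ← Real.rpow_mul (by positivity)]
          congr 2 <;> field_simp
      _ ≤ _ := by gcongr
  have h3 : A ^ (1 / s) ≤ A ^ (1 / s - 1 / r) * (C * weakNorm r x) := by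
    refine h1.trans ((mul_le_mul_of_nonneg_left h2 hC).trans_eq (by ring))
  rw [show A ^ (1 / s) = A ^ (1 / s - 1 / r) * A ^ (1 / r) by
    rw [← Real.rpow_add hApos]; congr 1; ring] at h3
  exact le_of_mul_le_mul_left h3 (by positivity)

theorem summingNorm_le_of_le {s r : ℝ} (hs : 1 ≤ s) (hsr : s ≤ r) {T : X →ₗ[ℂ] Y}
    (h : IsSummingRS s s T) : summingNorm r r T ≤ summingNorm s s T :=
  csInf_le_csInf ⟨0, fun _ hC => hC.1⟩ h fun _ hC => ⟨hC.1, hC.2.mono_exponent hs hsr hC.1⟩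

end WeakNorm

section LocalMean

variable {n : ℕ} {p α : ℝ}

/-- The weight `(1-|z|²)^{(n+1+α)/p}` normalizing point evaluations on `A^p_α`. -/
def pointWeight (p α : ℝ) (z : En n) : ℝ := (1 - ‖z‖ ^ 2) ^ (((n : ℝ) + 1 + α) / p)

theorem pointWeight_pos {z : En n} (hz : ‖z‖ < 1) : 0 < pointWeight p α z :=
  Real.rpow_pos_of_pos (one_sub_norm_sq_pos hz) _

variable [Fact (1 ≤ ENNReal.ofReal p)]

/-- The weighted local `L^ρ` mean of `G` near `z`, in Moebius coordinates. -/
def localMean (ρ R : ℝ) (z : En n) (G : BergmanSpace n p α) : ℝ≥0∞ :=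
  ENNReal.ofReal (pointWeight p α z) *
    (∫⁻ u in ball (0 : En n) R, ‖BergmanSpace.rep G (mobius z u)‖ₑ ^ ρ) ^ (1 / ρ)

theorem IsLattice.exists_sum_pointWeight_le {a : ℕ → En n} {δ : ℝ} (hδ : 0 < δ)
    (ha : IsLattice a δ) (hα : -1 < α) (hp : 1 ≤ p) {R : ℝ} (hR0 : 0 ≤ R) (hR : R < 1) :
    ∃ C : ℝ, 0 < C ∧ ∀ (G : BergmanSpace n p α) (u : En n), ‖u‖ ≤ R → ∀ K : Finset ℕ,
      (∑ k ∈ K, (pointWeight p α (a k) * ‖BergmanSpace.rep G (mobius (a k) u)‖) ^ p) ^ (1 / p) ≤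
        C * ‖G‖ := by
  obtain ⟨C, hC, h⟩ := ha.exists_sum_rpow_le hδ hα hp hR0 hR
  have hp0 : 0 < p := by linarith
  refine ⟨C ^ (1 / p), by positivity, fun G u hu K => ?_⟩
  have hmem : ∀ k, ‖a k‖ < 1 := fun k => mem_unitBall.1 (ha.1 k)
  have h1 := h _ (BergmanSpace.differentiableOn_rep G) u hu K
  rw [BergmanSpace.lintegral_rep hp, ← ENNReal.ofReal_mul hC.le] at h1
  have h2 : ∀ k ∈ K, ENNReal.ofReal ((1 - ‖a k‖ ^ 2) ^ ((n : ℝ) + 1 + α)) *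
      ‖BergmanSpace.rep G (mobius (a k) u)‖ₑ ^ p = ENNReal.ofReal
      ((pointWeight p α (a k) * ‖BergmanSpace.rep G (mobius (a k) u)‖) ^ p) := by
    intro k _
    have hs := one_sub_norm_sq_pos (hmem k)
    rw [Real.mul_rpow (pointWeight_pos (hmem k)).le (norm_nonneg _), pointWeight,
      ← Real.rpow_mul hs.le, div_mul_cancel₀ _ hp0.ne', ENNReal.ofReal_mul (by positivity),
      ← ENNReal.ofReal_rpow_of_nonneg (norm_nonneg _) hp0.le, ofReal_norm]
  have hnn : ∀ k ∈ K, 0 ≤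
      (pointWeight p α (a k) * ‖BergmanSpace.rep G (mobius (a k) u)‖) ^ p := fun k _ =>
    Real.rpow_nonneg (mul_nonneg (pointWeight_pos (hmem k)).le (norm_nonneg _)) _
  rw [Finset.sum_congr rfl h2, ← ENNReal.ofReal_sum_of_nonneg hnn,
    ENNReal.ofReal_le_ofReal_iff (by positivity)] at h1
  calc _ ≤ (C * ‖G‖ ^ p) ^ (1 / p) :=
        Real.rpow_le_rpow (Finset.sum_nonneg hnn) h1 (by positivity)
    _ = _ := by
      rw [Real.mul_rpow hC.le (by positivity), ← Real.rpow_mul (norm_nonneg _),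
        mul_one_div_cancel hp0.ne', Real.rpow_one]

theorem aemeasurable_rep_mobius {z : En n} (hz : ‖z‖ < 1) {R : ℝ} (hR : R < 1) (ρ : ℝ)
    (G : BergmanSpace n p α) :
    AEMeasurable (fun u => ‖BergmanSpace.rep G (mobius z u)‖ₑ ^ ρ)
      (volume.restrict (ball (0 : En n) R)) := by
  have hc : ContinuousOn (fun u => BergmanSpace.rep G (mobius z u)) (ball (0 : En n) R) :=
    ((BergmanSpace.differentiableOn_rep G).comp (differentiableOn_mobius hz)
      (mapsTo_mobius hz)).continuousOn.mono (ball_subset_ball hR.le)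
  exact (hc.aemeasurable measurableSet_ball).enorm.pow_const ρ

/-- Weak summability of the local means at a single lattice point. -/
theorem IsLattice.exists_sum_localMean_rpow_le {a : ℕ → En n} {δ : ℝ} (hδ : 0 < δ)
    (ha : IsLattice a δ) (hα : -1 < α) (hp : 1 ≤ p) {R : ℝ} (hR0 : 0 ≤ R) (hR : R < 1)
    {ρ : ℝ} (hρ : 1 ≤ ρ) :
    ∃ C : ℝ, 0 < C ∧ ∀ (m : ℕ) (x : Fin m → BergmanSpace n p α) (k : ℕ),
      ∑ j, localMean ρ R (a k) (x j) ^ ρ ≤ ENNReal.ofReal (C * weakNorm ρ x) ^ ρ := by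
  obtain ⟨C, hC, h⟩ := ha.exists_sum_pointWeight_le (p := p) hδ hα hp hR0 hR
  have hp0 : 0 < p := by linarith
  have hρ0 : 0 < ρ := by linarith
  set V : ℝ := (volume (ball (0 : En n) R)).toReal with hV
  refine ⟨C * (V + 1) ^ (1 / ρ), by positivity, fun m x k => ?_⟩
  have hk : ‖a k‖ < 1 := mem_unitBall.1 (ha.1 k)
  have hw := pointWeight_pos (p := p) (α := α) hk
  have hW := weakNorm_nonneg ρ x
  have hpt : ∀ u ∈ ball (0 : En n) R, ∑ j, ENNReal.ofReal (pointWeight p α (a k)) ^ ρ *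
      ‖BergmanSpace.rep (x j) (mobius (a k) u)‖ₑ ^ ρ ≤
        ENNReal.ofReal (C * weakNorm ρ x) ^ ρ := by
    intro u hu
    rw [mem_ball_zero_iff] at hu
    have hz : ‖mobius (a k) u‖ < 1 := norm_mobius_lt_one hk (hu.trans hR)
    have := sum_norm_rpow_le_weakNorm hρ hC.le
      ((pointWeight p α (a k) : ℂ) • BergmanSpace.evalAt hα _ hz) (fun G => by
        have h1 := h G u hu.le {k}
        rw [Finset.sum_singleton, ← Real.rpow_mul (by positivity), mul_one_div_cancel hp0.ne',
          Real.rpow_one] at h1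
        change ‖(pointWeight p α (a k) : ℂ) • BergmanSpace.rep G (mobius (a k) u)‖ ≤ _
        rwa [norm_smul, norm_real, Real.norm_of_nonneg hw.le]) x
    rw [ENNReal.ofReal_rpow_of_nonneg (mul_nonneg hC.le hW) hρ0.le]
    refine le_trans (le_of_eq ?_) (ENNReal.ofReal_le_ofReal this)
    rw [ENNReal.ofReal_sum_of_nonneg fun _ _ => by positivity]
    refine Finset.sum_congr rfl fun j _ => ?_
    change _ = ENNReal.ofReal (‖(pointWeight p α (a k) : ℂ) •
      BergmanSpace.rep (x j) (mobius (a k) u)‖ ^ ρ)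
    rw [norm_smul, norm_real, Real.norm_of_nonneg hw.le, ← ENNReal.ofReal_rpow_of_nonneg
      (by positivity) hρ0.le, ENNReal.ofReal_mul hw.le, ofReal_norm,
      ENNReal.mul_rpow_of_nonneg _ _ hρ0.le]
  have h1 := setLIntegral_mono' (μ := volume) measurableSet_ball hpt
  rw [setLIntegral_const, lintegral_finsetSum' _ fun j _ =>
    (aemeasurable_rep_mobius hk hR ρ (x j)).const_mul _] at h1
  have h2 : ∀ j, ∫⁻ u in ball (0 : En n) R, ENNReal.ofReal (pointWeight p α (a k)) ^ ρ *
      ‖BergmanSpace.rep (x j) (mobius (a k) u)‖ₑ ^ ρ = localMean ρ R (a k) (x j) ^ ρ := by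
    intro j
    rw [lintegral_const_mul'' _ (aemeasurable_rep_mobius hk hR ρ (x j)), localMean,
      ENNReal.mul_rpow_of_nonneg _ _ hρ0.le, one_div, ENNReal.rpow_inv_rpow hρ0.ne']
  simp only [h2] at h1
  refine h1.trans ?_
  rw [mul_right_comm C, ENNReal.ofReal_mul (p := C * weakNorm ρ x) (by positivity), ENNReal.mul_rpow_of_nonneg _ _ hρ0.le]
  gcongr
  rw [ENNReal.ofReal_rpow_of_nonneg (by positivity) hρ0.le, ← Real.rpow_mul (by positivity),
    one_div_mul_cancel hρ0.ne', Real.rpow_one, ENNReal.ofReal_add (by positivity) zero_le_one, hV,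
    ENNReal.ofReal_toReal measure_ball_lt_top.ne]
  exact le_self_add

/-- The square function estimate: weak summability of weighted square sums of local means. -/
theorem IsLattice.exists_sum_squareFunction_le {a : ℕ → En n} {δ : ℝ} (hδ : 0 < δ)
    (ha : IsLattice a δ) (hα : -1 < α) (hp : 1 ≤ p) {R : ℝ} (hR0 : 0 ≤ R) (hR : R < 1) :
    ∃ C : ℝ, 0 < C ∧ ∀ (m : ℕ) (x : Fin m → BergmanSpace n p α) (K : Finset ℕ) (γ : ℕ → ℝ)
      (Γ : ℝ), (∀ k, 0 ≤ γ k) → 0 ≤ Γ →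
      (∀ y : ℕ → ℝ, (∀ k, 0 ≤ y k) → ∑ k ∈ K, γ k * y k ≤ Γ * (∑ k ∈ K, y k ^ p) ^ (1 / p)) →
      ∑ j, (∑ k ∈ K, (ENNReal.ofReal (γ k) * localMean 1 R (a k) (x j)) ^ (2 : ℝ)) ^
          (1 / (2 : ℝ)) ≤ ENNReal.ofReal (C * Γ * weakNorm 1 x) := by
  obtain ⟨C, hC, h⟩ := ha.exists_sum_pointWeight_le (p := p) hδ hα hp hR0 hR
  have hp0 : 0 < p := by linarith
  set V : ℝ := (volume (ball (0 : En n) R)).toReal with hV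
  refine ⟨4 * C * (V + 1), by positivity, fun m x K γ Γ hγ hΓ hdual => ?_⟩
  have hmem : ∀ k, ‖a k‖ < 1 := fun k => mem_unitBall.1 (ha.1 k)
  have hw : ∀ k, 0 < pointWeight p α (a k) := fun k => pointWeight_pos (hmem k)
  have hW := weakNorm_nonneg 1 x
  set c : ℕ → ℝ := fun k => γ k * pointWeight p α (a k) with hc
  have hc0 : ∀ k, 0 ≤ c k := fun k => mul_nonneg (hγ k) (hw k).le
  set f : Fin m → ℕ → En n → ℝ≥0∞ := fun j k u =>
    ENNReal.ofReal (c k) * ‖BergmanSpace.rep (x j) (mobius (a k) u)‖ₑ with hf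
  have hfm : ∀ j k, AEMeasurable (f j k) (volume.restrict (ball (0 : En n) R)) := fun j k => by
    have := aemeasurable_rep_mobius (hmem k) hR 1 (x j)
    simp only [ENNReal.rpow_one] at this
    exact this.const_mul _
  have hpt : ∀ u ∈ ball (0 : En n) R, ∑ j, (∑ k ∈ K, f j k u ^ (2 : ℝ)) ^ (1 / (2 : ℝ)) ≤
      ENNReal.ofReal (4 * (C * Γ * weakNorm 1 x)) := by
    intro u hu
    rw [mem_ball_zero_iff] at hu
    have hz : ∀ k, ‖mobius (a k) u‖ < 1 := fun k => norm_mobius_lt_one (hmem k) (hu.trans hR)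
    set e : Fin m → ℕ → ℂ := fun j k => (c k : ℂ) * BergmanSpace.rep (x j) (mobius (a k) u) with he
    have hfe : ∀ j, (∑ k ∈ K, f j k u ^ (2 : ℝ)) ^ (1 / (2 : ℝ)) =
        ENNReal.ofReal √(∑ k ∈ K, ‖e j k‖ ^ 2) := by
      intro j
      rw [Real.sqrt_eq_rpow, ← ENNReal.ofReal_rpow_of_nonneg
        (Finset.sum_nonneg fun _ _ => sq_nonneg _) (by norm_num),
        ENNReal.ofReal_sum_of_nonneg fun _ _ => sq_nonneg _]
      congr 1
      refine Finset.sum_congr rfl fun k _ => ?_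
      rw [← Real.rpow_two, ← ENNReal.ofReal_rpow_of_nonneg (norm_nonneg _) (by norm_num)]
      simp only [hf, he]
      rw [norm_mul, norm_real, Real.norm_of_nonneg (hc0 k), ENNReal.ofReal_mul (hc0 k), ofReal_norm]
    rw [Finset.sum_congr rfl fun j _ => hfe j, ← ENNReal.ofReal_sum_of_nonneg
      fun _ _ => Real.sqrt_nonneg _]
    refine ENNReal.ofReal_le_ofReal ?_
    have hsigned : ∀ t : Finset ℕ, ∑ j, ‖signedSum K (e j) t‖ ≤ C * Γ * weakNorm 1 x := by
      intro t
      let L : BergmanSpace n p α →ₗ[ℂ] ℂ := ∑ k ∈ K, (if k ∈ t then (c k : ℂ) else -(c k : ℂ)) •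
        BergmanSpace.evalAt hα _ (hz k)
      have hL : ∀ G, L G = ∑ k ∈ K, (if k ∈ t then (c k : ℂ) else -(c k : ℂ)) *
          BergmanSpace.rep G (mobius (a k) u) := by
        intro G
        simp only [L, LinearMap.sum_apply, LinearMap.smul_apply, smul_eq_mul]
        rfl
      have hLb : ∀ G, ‖L G‖ ≤ C * Γ * ‖G‖ := by
        intro G
        rw [hL]
        refine (norm_sum_le _ _).trans ?_
        calc _ = ∑ k ∈ K, γ k *
              (pointWeight p α (a k) * ‖BergmanSpace.rep G (mobius (a k) u)‖) := by
              refine Finset.sum_congr rfl fun k _ => ?_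
              rw [norm_mul, ← mul_assoc]
              congr 1
              split_ifs
              · rw [norm_real, Real.norm_of_nonneg (hc0 k)]
              · rw [norm_neg, norm_real, Real.norm_of_nonneg (hc0 k)]
          _ ≤ Γ * (C * ‖G‖) := (hdual _ fun k => mul_nonneg (hw k).le (norm_nonneg _)).trans
              (mul_le_mul_of_nonneg_left (h G u hu.le K) hΓ)
          _ = _ := by ring
      have := sum_norm_rpow_le_weakNorm le_rfl (by positivity) L hLb x
      simp only [Real.rpow_one] at this
      refine le_trans (le_of_eq ?_) this
      refine Finset.sum_congr rfl fun j _ => ?_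
      rw [hL, signedSum]
      congr 1
      refine Finset.sum_congr rfl fun k _ => ?_
      split_ifs <;> simp [he]
    calc ∑ j, √(∑ k ∈ K, ‖e j k‖ ^ 2)
        ≤ ∑ j, 4 / 2 ^ K.card * ∑ t ∈ K.powerset, ‖signedSum K (e j) t‖ :=
          Finset.sum_le_sum fun j _ => sqrt_sum_norm_sq_le_signedSum K (e j)
      _ = 4 / 2 ^ K.card * ∑ t ∈ K.powerset, ∑ j, ‖signedSum K (e j) t‖ := by
          rw [← Finset.mul_sum, Finset.sum_comm]
      _ ≤ 4 / 2 ^ K.card * ∑ t ∈ K.powerset, C * Γ * weakNorm 1 x := by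
          gcongr with t
          exact hsigned t
      _ = _ := by
          rw [Finset.sum_const, Finset.card_powerset, nsmul_eq_mul]
          push_cast
          field_simp
  have hfin : ∀ j k, ∫⁻ u in ball (0 : En n) R, f j k u ≠ ⊤ := by
    intro j k
    have : ∀ u ∈ ball (0 : En n) R, f j k u ≤ ENNReal.ofReal (γ k * (C * ‖x j‖)) := by
      intro u hu
      rw [mem_ball_zero_iff] at hu
      have h1 := h (x j) u hu.le {k}
      rw [Finset.sum_singleton, ← Real.rpow_mul (mul_nonneg (hw k).le (norm_nonneg _)),
        mul_one_div_cancel hp0.ne', Real.rpow_one] at h1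
      simp only [hf, hc]
      rw [← ofReal_norm, ← ENNReal.ofReal_mul (hc0 k), mul_assoc]
      exact ENNReal.ofReal_le_ofReal (mul_le_mul_of_nonneg_left h1 (hγ k))
    refine ne_top_of_le_ne_top ?_ (setLIntegral_mono' measurableSet_ball this)
    rw [setLIntegral_const]
    exact ENNReal.mul_ne_top ENNReal.ofReal_ne_top measure_ball_lt_top.ne
  have hmean : ∀ j k, ENNReal.ofReal (γ k) * localMean 1 R (a k) (x j) =
      ∫⁻ u in ball (0 : En n) R, f j k u := by
    intro j k
    simp only [hf, hc, localMean, ENNReal.rpow_one, div_one]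
    rw [lintegral_const_mul' _ _ ENNReal.ofReal_ne_top, ENNReal.ofReal_mul (hγ k), mul_assoc]
  calc _ ≤ ∑ j, ∫⁻ u in ball (0 : En n) R, (∑ k ∈ K, f j k u ^ (2 : ℝ)) ^ (1 / (2 : ℝ)) := by
        refine Finset.sum_le_sum fun j _ => ?_
        simp only [hmean]
        exact rpow_sum_lintegral_sq_le K (fun k _ => hfm j k) fun k _ => hfin j k
    _ = ∫⁻ u in ball (0 : En n) R, ∑ j, (∑ k ∈ K, f j k u ^ (2 : ℝ)) ^ (1 / (2 : ℝ)) :=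
        (lintegral_finsetSum' _ fun j _ => (Finset.aemeasurable_fun_sum K fun k _ =>
          (hfm j k).pow_const _).pow_const _).symm
    _ ≤ ENNReal.ofReal (4 * (C * Γ * weakNorm 1 x)) * volume (ball (0 : En n) R) := by
        rw [← setLIntegral_const]
        exact setLIntegral_mono' measurableSet_ball hpt
    _ ≤ _ := by
        rw [← ENNReal.ofReal_toReal (measure_ball_lt_top (x := (0 : En n)) (r := R)
          (μ := volume)).ne, ← hV, ← ENNReal.ofReal_mul (by positivity)]
        refine ENNReal.ofReal_le_ofReal ?_
        have : 0 ≤ C * Γ * weakNorm 1 x := by positivity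
        nlinarith

end LocalMean

section Embedding

variable {n : ℕ} {p q α : ℝ} [Fact (1 ≤ ENNReal.ofReal p)]

theorem rpow_inv_mul_le_of_rpow_mul_le {x y v : ℝ≥0∞} {ρ : ℝ} (hρ : 0 < ρ) (hv0 : v ≠ 0)
    (hv : v ≠ ⊤) (h : x ^ ρ * v ≤ y) : x ≤ (v⁻¹) ^ (1 / ρ) * y ^ (1 / ρ) := by
  rw [← ENNReal.mul_rpow_of_nonneg _ _ (by positivity), one_div, ENNReal.le_rpow_inv_iff hρ,
    mul_comm, ← div_eq_mul_inv]
  exact ENNReal.le_div_iff_mul_le (Or.inl hv0) (Or.inl hv) |>.2 h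

/-- The `L^q(μ)` norm is controlled by lattice sums of local means. -/
theorem IsLattice.exists_lintegral_rep_le {a : ℕ → En n} {δ : ℝ} (hδ : 0 < δ)
    (ha : IsLattice a δ) (hq : 1 ≤ q) :
    ∃ R : ℝ, 0 ≤ R ∧ R < 1 ∧ ∀ ρ : ℝ, 1 ≤ ρ → ∃ C : ℝ, 0 < C ∧ ∀ μ : Measure (En n),
      μ (unitBall n)ᶜ = 0 → ∀ G : BergmanSpace n p α,
        ∫⁻ z, ‖BergmanSpace.rep G z‖ₑ ^ q ∂μ ≤ ∑' k,
          (ENNReal.ofReal C * (carlesonBeta n p q α δ μ a k * localMean ρ R (a k) G)) ^ q := by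
  obtain ⟨R, hR0, hR1, hball⟩ := exists_radius_bergmanBall (n := n) hδ
  have hmem : ∀ k, ‖a k‖ < 1 := fun k => mem_unitBall.1 (ha.1 k)
  have hq0 : 0 < q := by linarith
  refine ⟨(1 + R) / 2, by linarith, by linarith, fun ρ hρ => ?_⟩
  have hρ0 : 0 < ρ := by linarith
  set v := volume (ball (0 : En n) ((1 + R) / 2 - R)) with hv
  have hv0 : v ≠ 0 := (measure_ball_pos _ _ (by linarith)).ne'
  have hvt : v ≠ ⊤ := measure_ball_lt_top.ne
  have hCt : (v⁻¹) ^ (1 / ρ) ≠ ⊤ :=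
    ENNReal.rpow_ne_top_of_nonneg (by positivity) (ENNReal.inv_ne_top.2 hv0)
  have hC0 : (v⁻¹) ^ (1 / ρ) ≠ 0 := by
    rw [Ne, ENNReal.rpow_eq_zero_iff_of_pos (by positivity)]
    exact ENNReal.inv_ne_zero.2 hvt
  refine ⟨((v⁻¹) ^ (1 / ρ)).toReal, ENNReal.toReal_pos hC0 hCt, fun μ hμ G => ?_⟩
  rw [ENNReal.ofReal_toReal hCt]
  have hcover : μ.restrict (⋃ k, bergmanBall (a k) δ) = μ := by
    refine Measure.restrict_eq_self_of_ae_mem ?_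
    have : ∀ᵐ z ∂μ, z ∈ unitBall n := by rwa [ae_iff]
    filter_upwards [this] with z hz
    exact Set.mem_iUnion.2 (ha.2.1 z hz)
  rw [← hcover]
  refine (lintegral_iUnion_le _ _).trans ?_
  rw [hcover]
  refine ENNReal.tsum_le_tsum fun k => ?_
  set I := (∫⁻ u in ball (0 : En n) ((1 + R) / 2),
    ‖BergmanSpace.rep G (mobius (a k) u)‖ₑ ^ ρ) ^ (1 / ρ) with hI
  have hpt : ∀ z ∈ bergmanBall (a k) δ, ‖BergmanSpace.rep G z‖ₑ ^ q ≤ ((v⁻¹) ^ (1 / ρ) * I) ^ q := by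
    intro z hz
    rw [hball _ (hmem k)] at hz
    obtain ⟨hz1, hzR⟩ := hz
    refine ENNReal.rpow_le_rpow ?_ hq0.le
    have h1 := enorm_rpow_mul_volume_ball_le isOpen_unitBall
      ((BergmanSpace.differentiableOn_rep G).comp (differentiableOn_mobius (hmem k))
        (mapsTo_mobius (hmem k))) (v := mobius (a k) z) (ρ := (1 + R) / 2 - R)
      (fun w hw => mem_unitBall.2 (by
        rw [mem_ball_iff_norm] at hw
        have := norm_le_norm_add_norm_sub' w (mobius (a k) z)
        linarith)) hρ
    simp only [Function.comp_apply, mobius_mobius (hmem k) hz1] at h1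
    refine rpow_inv_mul_le_of_rpow_mul_le hρ0 hv0 hvt (h1.trans ?_)
    refine lintegral_mono_set fun w hw => ?_
    rw [mem_ball_iff_norm] at hw
    rw [mem_ball_zero_iff]
    have := norm_le_norm_add_norm_sub' w (mobius (a k) z)
    linarith
  refine (setLIntegral_mono measurable_const hpt).trans ?_
  rw [setLIntegral_const]
  have hs := one_sub_norm_sq_pos (hmem k)
  have hbeta : carlesonBeta n p q α δ μ a k * localMean ρ ((1 + R) / 2) (a k) G =
      μ (bergmanBall (a k) δ) ^ (1 / q) * I := by
    rw [carlesonBeta, localMean, ← hI, mul_mul_mul_comm, ← ENNReal.ofReal_mul (by positivity),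
      pointWeight, ← Real.rpow_add hs, neg_add_cancel, Real.rpow_zero, ENNReal.ofReal_one, one_mul]
  rw [hbeta, mul_left_comm, mul_comm (μ _ ^ _), ENNReal.mul_rpow_of_nonneg _ (μ _ ^ _) hq0.le,
    one_div q, ENNReal.rpow_inv_rpow hq0.ne']

variable [Fact (1 ≤ ENNReal.ofReal q)]

/-- A weak summability estimate for the `L^q(μ)` norms yields the embedding operator together with
a bound for its summing norm. -/
theorem exists_embedding_of_sum_le (hα : -1 < α) {μ : Measure (En n)}
    (hμ : μ (unitBall n)ᶜ = 0) {ρ C : ℝ} (hρ : 1 ≤ ρ) (hC : 0 ≤ C)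
    (h : ∀ (m : ℕ) (x : Fin m → BergmanSpace n p α),
      (∑ j, eLpNorm (BergmanSpace.rep (x j)) (ENNReal.ofReal q) μ ^ ρ) ^ (1 / ρ) ≤
        ENNReal.ofReal C * ENNReal.ofReal (weakNorm ρ x)) :
    ∃ J : BergmanSpace n p α →ₗ[ℂ] Lp ℂ (ENNReal.ofReal q) μ,
      RepresentsEmbedding n p q α μ ⇑J ∧ IsSummingRS ρ ρ ⇑J ∧ summingNorm ρ ρ ⇑J ≤ C := by
  have hρ0 : 0 < ρ := by linarith
  have hae : ∀ᵐ z ∂μ, z ∈ unitBall n := by rwa [ae_iff]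
  have hres : μ.restrict (unitBall n) = μ := Measure.restrict_eq_self_of_ae_mem hae
  have hL : ∀ G : BergmanSpace n p α, MemLp (BergmanSpace.rep G) (ENNReal.ofReal q) μ := by
    intro G
    constructor
    · rw [← hres]
      exact (BergmanSpace.differentiableOn_rep G).continuousOn.aestronglyMeasurable
        isOpen_unitBall.measurableSet
    · have h1 := h 1 fun _ => G
      rw [Finset.univ_unique, Finset.sum_singleton, one_div, ENNReal.rpow_rpow_inv hρ0.ne'] at h1
      exact h1.trans_lt (ENNReal.mul_lt_top ENNReal.ofReal_lt_top ENNReal.ofReal_lt_top)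
  let J : BergmanSpace n p α →ₗ[ℂ] Lp ℂ (ENNReal.ofReal q) μ :=
    { toFun := fun G => (hL G).toLp
      map_add' := fun G H => by
        rw [← MemLp.toLp_add, MemLp.toLp_eq_toLp_iff]
        filter_upwards [hae] with z hz using BergmanSpace.rep_add hα G H hz
      map_smul' := fun c G => by
        rw [RingHom.id_apply, ← MemLp.toLp_const_smul, MemLp.toLp_eq_toLp_iff]
        filter_upwards [hae] with z hz using BergmanSpace.rep_smul hα c G hz }
  have hJ : ∀ G, ENNReal.ofReal ‖J G‖ = eLpNorm (BergmanSpace.rep G) (ENNReal.ofReal q) μ := by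
    intro G
    change ENNReal.ofReal ‖(hL G).toLp‖ = _
    rw [Lp.norm_toLp, ENNReal.ofReal_toReal (hL G).2.ne]
  have hbound : SummingBoundWith ρ ρ J C := by
    intro m x
    have h1 := h m x
    simp only [← hJ] at h1
    rw [Finset.sum_congr rfl fun j _ => ENNReal.ofReal_rpow_of_nonneg (norm_nonneg (J (x j)))
      hρ0.le, ← ENNReal.ofReal_sum_of_nonneg fun _ _ => by positivity,
      ENNReal.ofReal_rpow_of_nonneg (by positivity) (by positivity), ← ENNReal.ofReal_mul hC,
      ENNReal.ofReal_le_ofReal_iff (mul_nonneg hC (weakNorm_nonneg ρ x))] at h1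
    exact h1
  refine ⟨J, fun G g hg hGg => ?_, ⟨C, hC, hbound⟩, csInf_le ⟨0, fun _ h => h.1⟩ ⟨hC, hbound⟩⟩
  have h1 : (J G : En n → ℂ) =ᵐ[μ] BergmanSpace.rep G := (hL G).coeFn_toLp
  refine h1.trans ?_
  filter_upwards [hae] with z hz using BergmanSpace.eqOn_rep hα G hg hGg hz

end Embedding

section SequenceSpaces

theorem ellNormE'_anti {s t : ℝ} (hs : 0 < s) (hst : s ≤ t) (x : ℕ → ℝ≥0∞) :
    ellNormE' t x ≤ ellNormE' s x := by
  have ht : 0 < t := hs.trans_le hst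
  set S := ellNormE' s x with hS
  have hSs : ∑' k, x k ^ s = S ^ s := by
    rw [hS, ellNormE', one_div, ENNReal.rpow_inv_rpow hs.ne']
  have hx : ∀ k, x k ≤ S := fun k => by
    rw [← ENNReal.rpow_le_rpow_iff hs, ← hSs]
    exact ENNReal.le_tsum k
  rw [ellNormE', one_div, ENNReal.rpow_inv_le_iff ht]
  calc ∑' k, x k ^ t ≤ ∑' k, x k ^ s * S ^ (t - s) := ENNReal.tsum_le_tsum fun k => by
        rw [show t = s + (t - s) by ring,
          ENNReal.rpow_add_of_nonneg _ _ hs.le (sub_nonneg.2 hst), add_sub_cancel_left]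
        gcongr
        exact hx k
    _ = S ^ t := by
        rw [ENNReal.tsum_mul_right, hSs, ← ENNReal.rpow_add_of_nonneg _ _ hs.le (sub_nonneg.2 hst)]
        congr 1
        ring

theorem ellNormE'_const_mul {s : ℝ} (hs : 0 < s) (c : ℝ≥0∞) (x : ℕ → ℝ≥0∞) :
    ellNormE' s (fun k => c * x k) = c * ellNormE' s x := by
  simp only [ellNormE', ENNReal.mul_rpow_of_nonneg _ _ hs.le]
  rw [ENNReal.tsum_mul_left, ENNReal.mul_rpow_of_nonneg _ _ (by positivity), one_div,
    ENNReal.rpow_rpow_inv hs.ne']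

theorem ENNReal.tsum_mul_le_Lp_mul_Lq {s t : ℝ} (hst : s.HolderConjugate t) (x y : ℕ → ℝ≥0∞) :
    ∑' k, x k * y k ≤ (∑' k, x k ^ s) ^ (1 / s) * (∑' k, y k ^ t) ^ (1 / t) := by
  have := ENNReal.lintegral_mul_le_Lp_mul_Lq Measure.count hst (f := x) (g := y)
    (measurable_of_countable x).aemeasurable (measurable_of_countable y).aemeasurable
  simpa only [lintegral_count, Pi.mul_apply] using this

/-- `Γ` bounds the norm of `γ` in the dual of `ℓ^p`. -/
def DualNormLE (p : ℝ) (γ : ℕ → ℝ≥0∞) (Γ : ℝ≥0∞) : Prop :=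
  (p = 1 → ∀ k, γ k ≤ Γ) ∧ (1 < p → ellNormE' (p / (p - 1)) γ ≤ Γ)

theorem DualNormLE.apply_le {p : ℝ} (hp : 1 ≤ p) {γ : ℕ → ℝ≥0∞} {Γ : ℝ≥0∞}
    (h : DualNormLE p γ Γ) (k : ℕ) : γ k ≤ Γ := by
  rcases hp.eq_or_lt with h1 | h1
  · exact h.1 h1.symm k
  · refine le_trans ?_ (h.2 h1)
    have : 0 < p / (p - 1) := div_pos (by linarith) (by linarith)
    rw [ellNormE', one_div, ENNReal.le_rpow_inv_iff this]
    exact ENNReal.le_tsum k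

theorem DualNormLE.sum_mul_le {p : ℝ} (hp : 1 ≤ p) {γ : ℕ → ℝ≥0∞} {Γ : ℝ≥0∞} (hΓ : Γ ≠ ⊤)
    (h : DualNormLE p γ Γ) (K : Finset ℕ) (y : ℕ → ℝ) (hy : ∀ k, 0 ≤ y k) :
    ∑ k ∈ K, (γ k).toReal * y k ≤ Γ.toReal * (∑ k ∈ K, y k ^ p) ^ (1 / p) := by
  have hle := h.apply_le hp
  rcases hp.eq_or_lt with h1 | h1
  · simp only [← h1, Real.rpow_one, div_one, Finset.mul_sum]
    exact Finset.sum_le_sum fun k _ =>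
      mul_le_mul_of_nonneg_right (ENNReal.toReal_mono hΓ (hle k)) (hy k)
  · have hp' : 0 < p / (p - 1) := div_pos (by linarith) (by linarith)
    have hconj : (p / (p - 1)).HolderConjugate p := (Real.HolderConjugate.conjExponent h1).symm
    refine (Real.inner_le_Lp_mul_Lq_of_nonneg K hconj (fun k _ => ENNReal.toReal_nonneg)
      fun k _ => hy k).trans ?_
    refine mul_le_mul_of_nonneg_right ?_
      (Real.rpow_nonneg (Finset.sum_nonneg fun k _ => Real.rpow_nonneg (hy k) _) _)
    have hγ : ∀ k, γ k ≠ ⊤ := fun k => ne_top_of_le_ne_top hΓ (hle k)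
    have e1 : ∑ k ∈ K, (γ k).toReal ^ (p / (p - 1)) = (∑ k ∈ K, γ k ^ (p / (p - 1))).toReal := by
      rw [ENNReal.toReal_sum fun k _ => ENNReal.rpow_ne_top_of_nonneg hp'.le (hγ k)]
      exact Finset.sum_congr rfl fun k _ => ENNReal.toReal_rpow _ _
    rw [e1, ENNReal.toReal_rpow]
    refine ENNReal.toReal_mono hΓ (le_trans ?_ (h.2 h1))
    exact ENNReal.rpow_le_rpow (ENNReal.sum_le_tsum K) (by positivity)

/-- Factorization of a sequence in `ℓ^s` as a product adapted to Hoelder's inequality. -/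
theorem exists_holder_factorization {p q : ℝ} (hp : 1 ≤ p) (hq : 1 ≤ q) (hq2 : q < 2)
    {b : ℕ → ℝ≥0∞} (hb : ellNormE' (2 * p * q / (2 * p - 2 * q + p * q)) b < ⊤) :
    ∃ (γ : ℕ → ℝ≥0∞) (Θ Γ : ℝ≥0∞), Γ ≠ ⊤ ∧ DualNormLE p γ Γ ∧
      Θ * Γ = ellNormE' (2 * p * q / (2 * p - 2 * q + p * q)) b ∧
      ∀ y : ℕ → ℝ≥0∞, ellNormE' q (fun k => b k * y k) ≤
        Θ * ellNormE' 2 fun k => γ k * y k := by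
  have hden : 0 < 2 * p - 2 * q + p * q := by nlinarith
  set s := 2 * p * q / (2 * p - 2 * q + p * q) with hs
  have hp0 : 0 < p := by linarith
  have hq0 : 0 < q := by linarith
  have hs0 : 0 < s := by positivity
  have h2q : 0 < 2 - q := by linarith
  set t := 2 * q / (2 - q) with ht
  have ht0 : 0 < t := by positivity
  set κ := 1 - 1 / p with hκ
  have hκ0 : 0 ≤ κ := by rw [hκ, sub_nonneg, div_le_one hp0]; exact hp
  have hinv : 1 / t + κ = 1 / s := by
    rw [hκ, hs, ht]
    field_simp
    ring
  set A := ∑' k, b k ^ s with hA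
  have hAt : A ≠ ⊤ := by
    intro h
    rw [ellNormE', ← hA, h, ENNReal.top_rpow_of_pos (by positivity)] at hb
    exact hb.ne rfl
  refine ⟨fun k => b k ^ (s * κ), A ^ (1 / t), A ^ κ, ENNReal.rpow_ne_top_of_nonneg hκ0 hAt,
    ⟨fun h1 k => ?_, fun h1 => ?_⟩, ?_, fun y => ?_⟩
  · have : κ = 0 := by rw [hκ, h1]; norm_num
    simp [this]
  · have hp1 : 0 < p - 1 := by linarith
    have e : ∀ k, (b k ^ (s * κ)) ^ (p / (p - 1)) = b k ^ s := by
      intro k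
      rw [← ENNReal.rpow_mul]
      congr 1
      rw [hκ]
      field_simp
    simp only [ellNormE', e]
    rw [← hA]
    refine le_of_eq ?_
    congr 1
    rw [hκ]
    field_simp
  · rw [← ENNReal.rpow_add_of_nonneg _ _ (by positivity) hκ0, hinv, ellNormE', hA]
  · have hconj : (2 / (2 - q)).HolderConjugate (2 / q) := by
      rw [Real.holderConjugate_iff]
      refine ⟨by rw [lt_div_iff₀ h2q]; linarith, by field_simp; ring⟩
    have e1 : ∀ k, (b k * y k) ^ q = (b k ^ (s / t)) ^ q * (b k ^ (s * κ) * y k) ^ q := by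
      intro k
      rw [← ENNReal.mul_rpow_of_nonneg _ _ hq0.le, ← mul_assoc,
        ← ENNReal.rpow_add_of_nonneg _ _ (by positivity) (by positivity)]
      congr 2
      rw [show s / t + s * κ = s * (1 / t + κ) by ring, hinv, mul_one_div_cancel hs0.ne',
        ENNReal.rpow_one]
    have h1 := ENNReal.tsum_mul_le_Lp_mul_Lq hconj (fun k => (b k ^ (s / t)) ^ q)
      fun k => (b k ^ (s * κ) * y k) ^ q
    have e2 : ∀ k, ((b k ^ (s / t)) ^ q) ^ (2 / (2 - q)) = b k ^ s := by
      intro k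
      rw [← ENNReal.rpow_mul, ← ENNReal.rpow_mul]
      congr 1
      rw [ht]
      field_simp
    have e3 : ∀ k, ((b k ^ (s * κ) * y k) ^ q) ^ (2 / q) = (b k ^ (s * κ) * y k) ^ (2 : ℝ) := by
      intro k
      rw [← ENNReal.rpow_mul]
      congr 1
      field_simp
    simp only [e2, e3, ← e1] at h1
    rw [← hA] at h1
    calc ellNormE' q (fun k => b k * y k) ≤ (A ^ (1 / (2 / (2 - q))) *
          (∑' k, (b k ^ (s * κ) * y k) ^ (2 : ℝ)) ^ (1 / (2 / q))) ^ (1 / q) :=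
          ENNReal.rpow_le_rpow h1 (by positivity)
      _ = _ := by
        rw [ENNReal.mul_rpow_of_nonneg _ _ (by positivity), ← ENNReal.rpow_mul,
          ← ENNReal.rpow_mul, ellNormE']
        congr 2
        · rw [ht]; field_simp
        · field_simp

end SequenceSpaces

section Estimates

variable {n : ℕ} {p q α : ℝ} [Fact (1 ≤ ENNReal.ofReal p)]

theorem IsLattice.exists_sum_ellNorm_two_le {a : ℕ → En n} {δ : ℝ} (hδ : 0 < δ)
    (ha : IsLattice a δ) (hα : -1 < α) (hp : 1 ≤ p) {R : ℝ} (hR0 : 0 ≤ R) (hR : R < 1) :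
    ∃ C : ℝ, 0 < C ∧ ∀ (m : ℕ) (x : Fin m → BergmanSpace n p α) (γ : ℕ → ℝ≥0∞) (Γ : ℝ≥0∞),
      Γ ≠ ⊤ → DualNormLE p γ Γ →
      ∑ j, ellNormE' 2 (fun k => γ k * localMean 1 R (a k) (x j)) ≤
        ENNReal.ofReal C * Γ * ENNReal.ofReal (weakNorm 1 x) := by
  obtain ⟨C, hC, h⟩ := ha.exists_sum_squareFunction_le (p := p) hδ hα hp hR0 hR
  refine ⟨C, hC, fun m x γ Γ hΓ hγ => ?_⟩
  have hlim : Tendsto (fun K : Finset ℕ => ∑ j,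
      (∑ k ∈ K, (γ k * localMean 1 R (a k) (x j)) ^ (2 : ℝ)) ^ (1 / (2 : ℝ))) atTop
      (nhds (∑ j, ellNormE' 2 (fun k => γ k * localMean 1 R (a k) (x j)))) :=
    tendsto_finsetSum _ fun j _ =>
      (ENNReal.continuous_rpow_const.tendsto _).comp ENNReal.summable.hasSum
  refine le_of_tendsto' hlim fun K => ?_
  have h1 := h m x K (fun k => (γ k).toReal) Γ.toReal (fun _ => ENNReal.toReal_nonneg)
    ENNReal.toReal_nonneg (hγ.sum_mul_le hp hΓ K)
  simp only [ENNReal.ofReal_toReal (ne_top_of_le_ne_top hΓ (hγ.apply_le hp _))] at h1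
  rwa [ENNReal.ofReal_mul (by positivity), ENNReal.ofReal_mul hC.le,
    ENNReal.ofReal_toReal hΓ] at h1

variable [Fact (1 ≤ ENNReal.ofReal q)]

theorem exists_embedding_of_sum_ellNorm_le (hα : -1 < α) (hq : 1 ≤ q) {a : ℕ → En n} {δ R : ℝ}
    {μ : Measure (En n)} (hμ : μ (unitBall n)ᶜ = 0) {ρ C C' D : ℝ} (hρ : 1 ≤ ρ) (hC : 0 < C)
    (hC' : 0 < C') (hD : C * C' ≤ D) {S : ℝ≥0∞} (hS : S < ⊤)
    (hnorm : ∀ G : BergmanSpace n p α, ∫⁻ z, ‖BergmanSpace.rep G z‖ₑ ^ q ∂μ ≤ ∑' k,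
      (ENNReal.ofReal C * (carlesonBeta n p q α δ μ a k * localMean ρ R (a k) G)) ^ q)
    (h : ∀ (m : ℕ) (x : Fin m → BergmanSpace n p α),
      ∑ j, ellNormE' q (fun k => carlesonBeta n p q α δ μ a k * localMean ρ R (a k) (x j)) ^ ρ ≤
        (ENNReal.ofReal C' * S * ENNReal.ofReal (weakNorm ρ x)) ^ ρ) :
    ∃ J : BergmanSpace n p α →ₗ[ℂ] Lp ℂ (ENNReal.ofReal q) μ,
      RepresentsEmbedding n p q α μ ⇑J ∧ IsSummingRS ρ ρ ⇑J ∧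
        ENNReal.ofReal (summingNorm ρ ρ ⇑J) ≤ ENNReal.ofReal D * S := by
  have hq0 : 0 < q := by linarith
  have hρ0 : 0 < ρ := by linarith
  obtain ⟨J, hJ, hsum, hle⟩ := exists_embedding_of_sum_le (p := p) (q := q) hα hμ hρ
    (C := C * C' * S.toReal) (by positivity) fun m x => by
      have h1 : ∀ j, eLpNorm (BergmanSpace.rep (x j)) (ENNReal.ofReal q) μ ≤ ENNReal.ofReal C *
          ellNormE' q (fun k => carlesonBeta n p q α δ μ a k * localMean ρ R (a k) (x j)) := by
        intro j
        rw [← ellNormE'_const_mul hq0, eLpNorm_eq_lintegral_rpow_enorm_toReal (by simpa using hq0)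
          ENNReal.ofReal_ne_top, ENNReal.toReal_ofReal hq0.le]
        exact ENNReal.rpow_le_rpow (hnorm (x j)) (by positivity)
      rw [one_div, ENNReal.rpow_inv_le_iff hρ0]
      calc _ ≤ ∑ j, (ENNReal.ofReal C * ellNormE' q
            (fun k => carlesonBeta n p q α δ μ a k * localMean ρ R (a k) (x j))) ^ ρ :=
            Finset.sum_le_sum fun j _ => ENNReal.rpow_le_rpow (h1 j) hρ0.le
        _ = ENNReal.ofReal C ^ ρ * ∑ j, ellNormE' q
            (fun k => carlesonBeta n p q α δ μ a k * localMean ρ R (a k) (x j)) ^ ρ := by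
            simp only [ENNReal.mul_rpow_of_nonneg _ _ hρ0.le, Finset.mul_sum]
        _ ≤ ENNReal.ofReal C ^ ρ *
            (ENNReal.ofReal C' * S * ENNReal.ofReal (weakNorm ρ x)) ^ ρ := by
            gcongr
            exact h m x
        _ = _ := by
            rw [← ENNReal.mul_rpow_of_nonneg _ _ hρ0.le, ENNReal.ofReal_mul (by positivity),
              ENNReal.ofReal_mul hC.le, ENNReal.ofReal_toReal hS.ne]
            ring_nf
  refine ⟨J, hJ, hsum, (ENNReal.ofReal_le_ofReal hle).trans ?_⟩
  rw [ENNReal.ofReal_mul (by positivity), ENNReal.ofReal_toReal hS.ne]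
  gcongr

theorem IsLattice.exists_embedding_of_ellNorm {a : ℕ → En n} {δ : ℝ} (hδ : 0 < δ)
    (ha : IsLattice a δ) (hα : -1 < α) (hp : 1 ≤ p) (hq : 1 ≤ q) {r : ℝ} (hr : 1 ≤ r)
    (hrq : r ≤ q) :
    ∃ D : ℝ, 0 < D ∧ ∀ D', D ≤ D' → ∀ μ : Measure (En n), μ (unitBall n)ᶜ = 0 →
      ellNormE' r (carlesonBeta n p q α δ μ a) < ⊤ →
      ∃ J : BergmanSpace n p α →ₗ[ℂ] Lp ℂ (ENNReal.ofReal q) μ,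
        RepresentsEmbedding n p q α μ ⇑J ∧ IsSummingRS r r ⇑J ∧
          ENNReal.ofReal (summingNorm r r ⇑J) ≤
            ENNReal.ofReal D' * ellNormE' r (carlesonBeta n p q α δ μ a) := by
  have hr0 : 0 < r := by linarith
  obtain ⟨R, hR0, hR1, hQ⟩ := ha.exists_lintegral_rep_le (p := p) (α := α) hδ hq
  obtain ⟨C, hC, hnorm⟩ := hQ r hr
  obtain ⟨C', hC', hmean⟩ := ha.exists_sum_localMean_rpow_le (p := p) hδ hα hp hR0 hR1 hr
  refine ⟨C * C', by positivity, fun D' hD' μ hμ hS => ?_⟩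
  refine exists_embedding_of_sum_ellNorm_le hα hq hμ hr hC hC' hD' hS (hnorm μ hμ) fun m x => ?_
  set b := carlesonBeta n p q α δ μ a
  calc ∑ j, ellNormE' q (fun k => b k * localMean r R (a k) (x j)) ^ r
      ≤ ∑ j, ∑' k, b k ^ r * localMean r R (a k) (x j) ^ r := by
        refine Finset.sum_le_sum fun j _ => ?_
        refine (ENNReal.rpow_le_rpow (ellNormE'_anti hr0 hrq _) hr0.le).trans_eq ?_
        simp only [ellNormE', one_div, ENNReal.rpow_inv_rpow hr0.ne',
          ENNReal.mul_rpow_of_nonneg _ _ hr0.le]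
    _ = ∑' k, b k ^ r * ∑ j, localMean r R (a k) (x j) ^ r := by
        rw [← Summable.tsum_finsetSum fun _ _ => ENNReal.summable]
        simp only [Finset.mul_sum]
    _ ≤ ∑' k, b k ^ r * ENNReal.ofReal (C' * weakNorm r x) ^ r :=
        ENNReal.tsum_le_tsum fun k => by
          gcongr
          exact hmean m x k
    _ = _ := by
        rw [ENNReal.tsum_mul_right, ENNReal.mul_rpow_of_nonneg _ _ hr0.le,
          ENNReal.mul_rpow_of_nonneg _ _ hr0.le, ellNormE', one_div, ENNReal.rpow_inv_rpow hr0.ne',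
          ENNReal.ofReal_mul hC'.le, ENNReal.mul_rpow_of_nonneg _ _ hr0.le]
        ring

theorem IsLattice.exists_embedding_of_factorization {a : ℕ → En n} {δ : ℝ} (hδ : 0 < δ)
    (ha : IsLattice a δ) (hα : -1 < α) (hp : 1 ≤ p) (hq : 1 ≤ q) :
    ∃ D : ℝ, 0 < D ∧ ∀ D', D ≤ D' → ∀ μ : Measure (En n), μ (unitBall n)ᶜ = 0 →
      ∀ (γ : ℕ → ℝ≥0∞) (Θ Γ : ℝ≥0∞), Γ ≠ ⊤ → Θ * Γ < ⊤ → DualNormLE p γ Γ →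
      (∀ y : ℕ → ℝ≥0∞, ellNormE' q (fun k => carlesonBeta n p q α δ μ a k * y k) ≤
        Θ * ellNormE' 2 fun k => γ k * y k) →
      ∃ J : BergmanSpace n p α →ₗ[ℂ] Lp ℂ (ENNReal.ofReal q) μ,
        RepresentsEmbedding n p q α μ ⇑J ∧ IsSummingRS 1 1 ⇑J ∧
          ENNReal.ofReal (summingNorm 1 1 ⇑J) ≤ ENNReal.ofReal D' * (Θ * Γ) := by
  obtain ⟨R, hR0, hR1, hQ⟩ := ha.exists_lintegral_rep_le (p := p) (α := α) hδ hq
  obtain ⟨C, hC, hnorm⟩ := hQ 1 le_rfl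
  obtain ⟨C', hC', hsq⟩ := ha.exists_sum_ellNorm_two_le (p := p) hδ hα hp hR0 hR1
  refine ⟨C * C', by positivity, fun D' hD' μ hμ γ Θ Γ hΓ hS hγ hfac => ?_⟩
  refine exists_embedding_of_sum_ellNorm_le hα hq hμ le_rfl hC hC' hD' hS (hnorm μ hμ)
    fun m x => ?_
  simp only [ENNReal.rpow_one]
  calc _ ≤ ∑ j, Θ * ellNormE' 2 fun k => γ k * localMean 1 R (a k) (x j) :=
        Finset.sum_le_sum fun j _ => hfac _
    _ ≤ Θ * (ENNReal.ofReal C' * Γ * ENNReal.ofReal (weakNorm 1 x)) := by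
        rw [← Finset.mul_sum]
        gcongr
        exact hsq m x γ Γ hΓ hγ
    _ = _ := by ring

end Estimates

theorem statement7 (n : ℕ) (hn : 1 ≤ n) (p q r α δ : ℝ)
    (hα : -1 < α) (hp : 1 ≤ p) (hq : 1 ≤ q) (hr : 1 ≤ r) (hδ : 0 < δ)
    [Fact (1 ≤ ENNReal.ofReal p)] [Fact (1 ≤ ENNReal.ofReal q)]
    (a : ℕ → En n) (ha : IsLattice a δ) :
    ∃ C > (0 : ℝ), ∀ μ : Measure (En n), μ (unitBall n)ᶜ = 0 →
      -- (1) the case 1 ≤ q < 2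
      (q < 2 →
        ellNormE' (2 * p * q / (2 * p - 2 * q + p * q)) (carlesonBeta n p q α δ μ a) < ⊤ →
        ∃ J : BergmanSpace n p α →ₗ[ℂ] Lp ℂ (ENNReal.ofReal q) μ,
          RepresentsEmbedding n p q α μ ⇑J ∧ IsSummingRS 1 1 ⇑J ∧
            summingNorm r r ⇑J ≤ summingNorm 1 1 ⇑J ∧
            ENNReal.ofReal (summingNorm 1 1 ⇑J) ≤ ENNReal.ofReal C *
              ellNormE' (2 * p * q / (2 * p - 2 * q + p * q)) (carlesonBeta n p q α δ μ a)) ∧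
      -- (2) the case q ≥ 2, p > 1
      (2 ≤ q → 1 < p →
        ellNormE' (p / (p - 1)) (carlesonBeta n p q α δ μ a) < ⊤ →
        ∃ J : BergmanSpace n p α →ₗ[ℂ] Lp ℂ (ENNReal.ofReal q) μ,
          RepresentsEmbedding n p q α μ ⇑J ∧ IsSummingRS 1 1 ⇑J ∧
            summingNorm r r ⇑J ≤ summingNorm 1 1 ⇑J ∧
            ENNReal.ofReal (summingNorm 1 1 ⇑J) ≤ ENNReal.ofReal C *
              ellNormE' (p / (p - 1)) (carlesonBeta n p q α δ μ a)) ∧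
      -- (2') the case q ≥ 2, p = 1 (ℓ^∞)
      (2 ≤ q → p = 1 →
        (⨆ k, carlesonBeta n p q α δ μ a k) < ⊤ →
        ∃ J : BergmanSpace n p α →ₗ[ℂ] Lp ℂ (ENNReal.ofReal q) μ,
          RepresentsEmbedding n p q α μ ⇑J ∧ IsSummingRS 1 1 ⇑J ∧
            summingNorm r r ⇑J ≤ summingNorm 1 1 ⇑J ∧
            ENNReal.ofReal (summingNorm 1 1 ⇑J) ≤ ENNReal.ofReal C *
              ⨆ k, carlesonBeta n p q α δ μ a k) ∧
      -- (3) the case 1 ≤ r ≤ q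
      (r ≤ q →
        ellNormE' r (carlesonBeta n p q α δ μ a) < ⊤ →
        ∃ J : BergmanSpace n p α →ₗ[ℂ] Lp ℂ (ENNReal.ofReal q) μ,
          RepresentsEmbedding n p q α μ ⇑J ∧ IsSummingRS r r ⇑J ∧
            ENNReal.ofReal (summingNorm r r ⇑J) ≤ ENNReal.ofReal C *
              ellNormE' r (carlesonBeta n p q α δ μ a)) ∧
      -- (4) the case 1 ≤ q ≤ r
      (q ≤ r →
        ellNormE' q (carlesonBeta n p q α δ μ a) < ⊤ →
        ∃ J : BergmanSpace n p α →ₗ[ℂ] Lp ℂ (ENNReal.ofReal q) μ,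
          RepresentsEmbedding n p q α μ ⇑J ∧ IsSummingRS q q ⇑J ∧
            summingNorm r r ⇑J ≤ summingNorm q q ⇑J ∧
            ENNReal.ofReal (summingNorm q q ⇑J) ≤ ENNReal.ofReal C *
              ellNormE' q (carlesonBeta n p q α δ μ a)) := by
  obtain ⟨D₁, hD₁, h₁⟩ :=
    ha.exists_embedding_of_factorization (p := p) (q := q) (α := α) hδ hα hp hq
  obtain ⟨D₂, hD₂, h₂⟩ := ha.exists_embedding_of_ellNorm (p := p) (q := q) (α := α) hδ hα hp hq
    (le_min hr hq) (min_le_right r q)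
  obtain ⟨D₃, hD₃, h₃⟩ := ha.exists_embedding_of_ellNorm (p := p) (q := q) (α := α) hδ hα hp hq
    hq le_rfl
  refine ⟨D₁ + D₂ + D₃, by positivity, fun μ hμ => ?_⟩
  have h₁ := h₁ (D₁ + D₂ + D₃) (by linarith) μ hμ
  refine ⟨fun hq2 hβ => ?_, fun hq2 hp1 hβ => ?_, fun hq2 hp1 hβ => ?_, fun hrq hβ => ?_,
    fun hqr hβ => ?_⟩
  · obtain ⟨γ, Θ, Γ, hΓ, hγ, hΘΓ, hfac⟩ := exists_holder_factorization hp hq hq2 hβ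
    obtain ⟨J, hJ, hsum, hle⟩ := h₁ γ Θ Γ hΓ (hΘΓ ▸ hβ) hγ hfac
    exact ⟨J, hJ, hsum, summingNorm_le_of_le le_rfl hr hsum, hΘΓ ▸ hle⟩
  · obtain ⟨J, hJ, hsum, hle⟩ := h₁ (carlesonBeta n p q α δ μ a) 1 _ hβ.ne (by rwa [one_mul])
      ⟨fun h => absurd h hp1.ne', fun _ => le_rfl⟩
      fun y => by rw [one_mul]; exact ellNormE'_anti two_pos hq2 _
    exact ⟨J, hJ, hsum, summingNorm_le_of_le le_rfl hr hsum, by rwa [one_mul] at hle⟩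
  · obtain ⟨J, hJ, hsum, hle⟩ := h₁ (carlesonBeta n p q α δ μ a) 1 _ hβ.ne (by rwa [one_mul])
      ⟨fun _ k => le_iSup _ k, fun h => absurd hp1 h.ne'⟩
      fun y => by rw [one_mul]; exact ellNormE'_anti two_pos hq2 _
    exact ⟨J, hJ, hsum, summingNorm_le_of_le le_rfl hr hsum, by rwa [one_mul] at hle⟩
  · rw [min_eq_left hrq] at h₂
    exact h₂ _ (by linarith) μ hμ hβ
  · obtain ⟨J, hJ, hsum, hle⟩ := h₃ (D₁ + D₂ + D₃) (by linarith) μ hμ hβ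
    exact ⟨J, hJ, hsum, summingNorm_le_of_le hq hqr hsum, hle⟩
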